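/- Let N ∈ [1,∞) and let (X,d,m) be a geodesic metric measure space, with m locally finite, in which the Rényi entropy functional E_N is strongly displacement convex. Then for every continuous function u : X → ℝ, every upper gradient g of u, every x ∈ X and every r > 0, the strong local Poincaré inequality holds: ⨍_{B(x,r)} |u − ⟨u⟩_{B(x,r)}| dm ≤ 2^{N+2} r ⨍_{B(x,r)} g dm, where ⨍ denotes the average integral (the balls on both sides are the same). -/

import Mathlib

open MeasureTheory Metric Set Filter ProbabilityTheory
open scoped ENNReal NNReal Topology ProbabilityTheory

noncomputable section

variable {X : Type*} [MetricSpace X] [MeasurableSpace X]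

/-- A constant-speed geodesic parametrized on `[0,1]`:
`d(γ(s),γ(t)) = |s - t| · d(γ(0),γ(1))` for all `s,t ∈ [0,1]`. -/
def IsGeodesicMap (γ : ℝ → X) : Prop :=
  ∀ s ∈ Set.Icc (0:ℝ) 1, ∀ t ∈ Set.Icc (0:ℝ) 1,
    dist (γ s) (γ t) = |s - t| * dist (γ 0) (γ 1)

/-- A geodesic metric space: any two points are joined by a geodesic. -/
def IsGeodesicSpace (X : Type*) [MetricSpace X] : Prop :=
  ∀ x y : X, ∃ γ : ℝ → X, IsGeodesicMap γ ∧ γ 0 = x ∧ γ 1 = y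

/-- The squared Wasserstein cost: infimum over couplings of `∫ d(x,y)² dσ`. -/
def W2sq (μ ν : Measure X) : ℝ≥0∞ :=
  ⨅ (σ : Measure (X × X)) (_ : σ.map Prod.fst = μ ∧ σ.map Prod.snd = ν),
    ∫⁻ p, edist p.1 p.2 ^ 2 ∂σ

/-- The Wasserstein distance `W₂`, with values in `[0,∞]`. -/
def W2 (μ ν : Measure X) : ℝ≥0∞ := W2sq μ ν ^ (1/2 : ℝ)

/-- A geodesic in the Wasserstein space `(P(X), W₂)`, parametrized on `[0,1]`. -/
def IsW2Geodesic (Γ : ℝ → Measure X) : Prop :=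
  (∀ t ∈ Set.Icc (0:ℝ) 1, IsProbabilityMeasure (Γ t)) ∧
  W2 (Γ 0) (Γ 1) ≠ ∞ ∧
  ∀ s ∈ Set.Icc (0:ℝ) 1, ∀ t ∈ Set.Icc (0:ℝ) 1,
    W2 (Γ s) (Γ t) = ENNReal.ofReal |s - t| * W2 (Γ 0) (Γ 1)

/-- The evaluation map `e_t : γ ↦ γ(t)`. -/
def evalGeo (t : ℝ) : (ℝ → X) → X := fun γ => γ t

/-- `π ∈ GeoOpt(μ,ν)`: a probability measure on geodesics of `X` such that
`t ↦ (e_t)_# π` is a geodesic in `(P(X), W₂)` from `μ` to `ν`. -/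
def IsGeoOpt (μ ν : Measure X) (π : Measure (ℝ → X)) : Prop :=
  IsProbabilityMeasure π ∧ (∀ᵐ γ ∂π, IsGeodesicMap γ) ∧
  π.map (evalGeo 0) = μ ∧ π.map (evalGeo 1) = ν ∧
  IsW2Geodesic (fun t => π.map (evalGeo t))

/-- `ρ ↦ ρ^(1-1/N)` with the convention `0^(1-1/N) = 0` (also for `N = 1`). -/
def renyiIntegrand (N : ℝ) (ρ : ℝ≥0∞) : ℝ≥0∞ :=
  haveI := Classical.dec (ρ = 0)
  if ρ = 0 then 0 else ρ ^ (1 - 1/N)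

/-- The Rényi entropy functional `E_N(μ) = -∫ ρ^(1-1/N) dm`, where `ρ` is the density of
the absolutely continuous part of `μ` with respect to `m`. -/
def renyiEntropy (N : ℝ) (m μ : Measure X) : EReal :=
  - ((∫⁻ x, renyiIntegrand N (μ.rnDeriv m x) ∂m : ℝ≥0∞) : EReal)

/-- The Shannon entropy functional `E_∞(μ) = ∫ ρ log ρ dm` if `μ = ρ m ≪ m`
(defined as the difference of the integrals of the positive and negative parts),
and `+∞` otherwise. -/
def shannonEntropy (m μ : Measure X) : EReal :=
  haveI := Classical.dec (μ ≪ m)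
  if μ ≪ m then
    ((∫⁻ x, ENNReal.ofReal ((μ.rnDeriv m x).toReal * Real.log (μ.rnDeriv m x).toReal) ∂m :
        ℝ≥0∞) : EReal)
      - ((∫⁻ x, ENNReal.ofReal (-((μ.rnDeriv m x).toReal *
          Real.log (μ.rnDeriv m x).toReal)) ∂m : ℝ≥0∞) : EReal)
  else (⊤ : EReal)

/-- A functional on `P(X)` is strongly displacement convex if it is convex along every
geodesic of the Wasserstein space. -/
def StronglyDisplacementConvex (E : Measure X → EReal) : Prop :=
  ∀ Γ : ℝ → Measure X, IsW2Geodesic Γ → ∀ s ∈ Set.Icc (0:ℝ) 1,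
    E (Γ s) ≤ ((1 - s : ℝ) : EReal) * E (Γ 0) + ((s : ℝ) : EReal) * E (Γ 1)

/-- The displacement convexity class `DC_∞`. -/
def MemDCinf (F : ℝ → ℝ) : Prop :=
  ContinuousOn F (Set.Ici 0) ∧ ConvexOn ℝ (Set.Ici 0) F ∧ F 0 = 0 ∧
  ConvexOn ℝ Set.univ (fun l : ℝ => Real.exp l * F (Real.exp (-l)))

/-- The displacement convexity class `DC_N`, `N ∈ [1,∞)`. -/
def MemDCN (N : ℝ) (F : ℝ → ℝ) : Prop :=
  ContinuousOn F (Set.Ici 0) ∧ ConvexOn ℝ (Set.Ici 0) F ∧ F 0 = 0 ∧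
  ConvexOn ℝ (Set.Ioi 0) (fun l : ℝ => l ^ N * F (l ^ (-N)))

/-- `F′(∞) = lim_{r → ∞} F(r)/r` (as an extended real number). -/
def derivAtInfty (F : ℝ → ℝ) : EReal :=
  Filter.limsup (fun r : ℝ => ((F r / r : ℝ) : EReal)) Filter.atTop

/-- The integral functional `𝔉(μ) = ∫ F(ρ) dm + F′(∞) μ^⊥(X)` associated to `F`,
where `μ = ρ m + μ^⊥` is the Lebesgue decomposition of `μ` w.r.t. `m`. -/
def entFunctional (F : ℝ → ℝ) (m μ : Measure X) : EReal :=
  ((∫ x, F ((μ.rnDeriv m x).toReal) ∂m : ℝ) : EReal)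
    + derivAtInfty F * ((μ.singularPart m Set.univ : ℝ≥0∞) : EReal)

/-- Distortion coefficients `β_t(x,y)` for `N = ∞`. -/
def betaInf (K : ℝ) (t : ℝ) (x y : X) : ℝ :=
  Real.exp (K * (1 - t ^ 2) * dist x y ^ 2 / 6)

/-- Distortion coefficients `β_t(x,y)` for `N ∈ [1,∞)` and `K ≤ 0`. -/
def betaFin (K N : ℝ) (t : ℝ) (x y : X) : ℝ :=
  haveI := Classical.dec (K = 0 ∨ N = 1)
  if K = 0 ∨ N = 1 then 1
  else (Real.sinh (t * (Real.sqrt (|K| / (N - 1)) * dist x y)) /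
       (t * Real.sinh (Real.sqrt (|K| / (N - 1)) * dist x y))) ^ (N - 1)

/-- The joint law of the endpoints `(γ(0), γ(1))` under `π`. -/
def endpointLaw (π : Measure (ℝ → X)) : Measure (X × X) :=
  π.map (fun γ => (γ 0, γ 1))

/-- The curvature-dimension condition `CD(K,∞)` (for `K ≤ 0`). -/
def IsCDinf (K : ℝ) (m : Measure X) : Prop :=
  ∀ μ₀ μ₁ : Measure X, IsProbabilityMeasure μ₀ → IsProbabilityMeasure μ₁ →
    W2 μ₀ μ₁ ≠ ∞ →
    ∃ π : Measure (ℝ → X), IsGeoOpt μ₀ μ₁ π ∧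
      ∃ κ₀ κ₁ : Kernel X X, IsMarkovKernel κ₀ ∧ IsMarkovKernel κ₁ ∧
        μ₀ ⊗ₘ κ₀ = endpointLaw π ∧
        μ₁ ⊗ₘ κ₁ = (endpointLaw π).map Prod.swap ∧
        ∀ F : ℝ → ℝ, MemDCinf F → ∀ t ∈ Set.Icc (0:ℝ) 1,
          entFunctional F m (π.map (evalGeo t)) ≤
            ((1 - t : ℝ) : EReal) *
              ((∫ x₀, ∫ x₁, betaInf K (1 - t) x₀ x₁ *
                  F ((μ₀.rnDeriv m x₀).toReal / betaInf K (1 - t) x₀ x₁) ∂(κ₀ x₀) ∂m : ℝ) : EReal)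
            + ((t : ℝ) : EReal) *
              ((∫ x₁, ∫ x₀, betaInf K t x₀ x₁ *
                  F ((μ₁.rnDeriv m x₁).toReal / betaInf K t x₀ x₁) ∂(κ₁ x₁) ∂m : ℝ) : EReal)
            + derivAtInfty F *
              ((ENNReal.ofReal (1 - t) * μ₀.singularPart m Set.univ
                + ENNReal.ofReal t * μ₁.singularPart m Set.univ : ℝ≥0∞) : EReal)

/-- The curvature-dimension condition `CD(K,N)` for `K ≤ 0`, `N ∈ [1,∞)`. -/
def IsCDfin (K N : ℝ) (m : Measure X) : Prop :=
  ∀ μ₀ μ₁ : Measure X, IsProbabilityMeasure μ₀ → IsProbabilityMeasure μ₁ →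
    W2 μ₀ μ₁ ≠ ∞ →
    ∃ π : Measure (ℝ → X), IsGeoOpt μ₀ μ₁ π ∧
      ∃ κ₀ κ₁ : Kernel X X, IsMarkovKernel κ₀ ∧ IsMarkovKernel κ₁ ∧
        μ₀ ⊗ₘ κ₀ = endpointLaw π ∧
        μ₁ ⊗ₘ κ₁ = (endpointLaw π).map Prod.swap ∧
        ∀ F : ℝ → ℝ, MemDCN N F → ∀ t ∈ Set.Icc (0:ℝ) 1,
          entFunctional F m (π.map (evalGeo t)) ≤
            ((1 - t : ℝ) : EReal) *
              ((∫ x₀, ∫ x₁, betaFin K N (1 - t) x₀ x₁ *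
                  F ((μ₀.rnDeriv m x₀).toReal / betaFin K N (1 - t) x₀ x₁) ∂(κ₀ x₀) ∂m : ℝ) : EReal)
            + ((t : ℝ) : EReal) *
              ((∫ x₁, ∫ x₀, betaFin K N t x₀ x₁ *
                  F ((μ₁.rnDeriv m x₁).toReal / betaFin K N t x₀ x₁) ∂(κ₁ x₁) ∂m : ℝ) : EReal)
            + derivAtInfty F *
              ((ENNReal.ofReal (1 - t) * μ₀.singularPart m Set.univ
                + ENNReal.ofReal t * μ₁.singularPart m Set.univ : ℝ≥0∞) : EReal)

/-- The support of a measure on a metric space. -/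
def msupport (μ : Measure X) : Set X := {x : X | ∀ ε > 0, 0 < μ (Metric.ball x ε)}

/-- `g` is an upper gradient of `u`: for every curve `γ : [0,1] → X` which is Lipschitz with
constant `l` (in particular of length at most `l`),
`|u(γ(1)) - u(γ(0))| ≤ l ∫₀¹ g(γ(t)) dt`. -/
def IsUpperGradient (u : X → ℝ) (g : X → ℝ≥0∞) : Prop :=
  Measurable g ∧
  ∀ (γ : ℝ → X) (l : ℝ≥0), LipschitzOnWith l γ (Set.Icc 0 1) →
    ENNReal.ofReal |u (γ 1) - u (γ 0)| ≤ (l : ℝ≥0∞) * ∫⁻ t in Set.Icc (0:ℝ) 1, g (γ t)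

/-- The evolution variational inequality (E.V.I.) condition for the entropy functional `E`:
from every absolutely continuous probability measure there starts a curve `(μ_t)_{t ≥ 0}` with
`limsup_{h ↓ 0} (1/2h)(W₂²(ν,μ_{t+h}) - W₂²(ν,μ_t)) ≤ E(ν) - E(μ_t)` for all `t ≥ 0` and all
absolutely continuous probability measures `ν`. -/
def EVIGradientFlow (E : Measure X → EReal) (m : Measure X) : Prop :=
  ∀ μ₀ : Measure X, IsProbabilityMeasure μ₀ → μ₀ ≪ m →
    ∃ μ : ℝ → Measure X, μ 0 = μ₀ ∧ (∀ t : ℝ, 0 ≤ t → IsProbabilityMeasure (μ t)) ∧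
      ∀ t : ℝ, 0 ≤ t → ∀ ν : Measure X, IsProbabilityMeasure ν → ν ≪ m →
        Filter.limsup (fun h : ℝ =>
            (((1 / (2 * h)) * ((W2sq ν (μ (t + h))).toReal - (W2sq ν (μ t)).toReal) : ℝ) : EReal))
          (nhdsWithin 0 (Set.Ioi 0)) ≤ E ν - E (μ t)

end

/-!
Write `B = B(x, r)`. Displacement convexity controls the density of a Wasserstein geodesic: apply
it to the dynamical plan conditioned on the curves that lie in `E` at time `t`, and combine
`-E_N(μ) ≤ m(E)^(1/N)` for `μ` concentrated on `E` (Hölder) with `-E_N(μ) ≥ a^(1/N)` for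
`a • μ ≤ m`.

Transport the normalized measure on `B` halfway along geodesics to the centre `x`. At times
`t ≤ 1/2` the density stays below `2^N / m(B)`, so on average `u` changes along these curves by at
most `(r/2) 2^N ⨍_B g`, and the resulting measure `μ` lives on `B(x, r/2)`. Now split `μ` at a
median `M` of `u` into two halves and transport the upper half to the lower one. The curves stay in
`B`, the density bound persists, and `u(γ₀) ≥ M ≥ u(γ₁)` turns `|u(γ₀) - M| + |u(γ₁) - M|` into
`|u(γ₀) - u(γ₁)|`, which the upper gradient bounds. Together
`⨍_B |u - M| ≤ (3/2) 2^N r ⨍_B g`, and replacing `M` by the mean costs a factor `2`.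
-/

section MeasurableSelection

theorem iInter_closure_image_subset_image_Iic {Y : Type*} [MetricSpace Y] {h : (ℕ → ℕ) → Y}
    (hh : Continuous h) {C : ℕ → Set (ℕ → ℕ)} {b : ℕ → ℕ}
    (hC : ∀ k, ∀ x ∈ C k, ∀ i < k, x i ≤ b i) :
    ⋂ k, closure (h '' C k) ⊆ h '' Iic b := by
  intro y hy
  have exists_near (k : ℕ) : ∃ x ∈ C k, dist y (h x) < 1 / ((k : ℝ) + 1) := by
    simpa using Metric.mem_closure_iff.1 (mem_iInter.1 hy k) _ Nat.one_div_pos_of_nat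
  choose x hxC hxy using exists_near
  have isCompact_Iic : IsCompact (Iic b) := Icc_bot (a := b) ▸ isCompact_Icc
  obtain ⟨z, hz, φ, hφ, hφz⟩ := isCompact_Iic.tendsto_subseq fun k ↦ (inf_le_right : x k ⊓ b ≤ b)
  have tendsto_x : Tendsto (x ∘ φ) atTop (𝓝 z) := by
    refine tendsto_pi_nhds.2 fun i ↦ (tendsto_pi_nhds.1 hφz i).congr' ?_
    filter_upwards [hφ.tendsto_atTop.eventually_gt_atTop i] with k hk
    exact inf_eq_left.2 (hC _ _ (hxC _) i hk)
  have tendsto_hx : Tendsto (h ∘ x) atTop (𝓝 y) := by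
    refine tendsto_iff_dist_tendsto_zero.2 (squeeze_zero (fun _ ↦ dist_nonneg) (fun k ↦ ?_)
      tendsto_one_div_add_atTop_nhds_zero_nat)
    rw [dist_comm]
    exact (hxy k).le
  exact ⟨z, hz, tendsto_nhds_unique ((hh.tendsto z).comp tendsto_x)
    (tendsto_hx.comp hφ.tendsto_atTop)⟩

variable {Y : Type*} [MeasurableSpace Y]

theorem exists_measurable_section_of_isCompact_real [TopologicalSpace Y] [T2Space Y] [BorelSpace Y]
    {T : Set ℝ} (hT : IsCompact T) {f : ℝ → Y} (hf : ContinuousOn f T) :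
    ∃ s : Y → ℝ, Measurable s ∧ ∀ y ∈ f '' T, s y ∈ T ∧ f (s y) = y := by
  have isCompact_fibre (y : Y) : IsCompact (T ∩ f ⁻¹' {y}) :=
    hT.of_isClosed_subset (hf.preimage_isClosed_of_isClosed hT.isClosed isClosed_singleton)
      inter_subset_left
  have sInf_mem_fibre : ∀ y ∈ f '' T, sInf (T ∩ f ⁻¹' {y}) ∈ T ∩ f ⁻¹' {y} := by
    rintro _ ⟨t, ht, rfl⟩
    exact (isCompact_fibre _).sInf_mem ⟨t, ht, rfl⟩
  refine ⟨fun y ↦ sInf (T ∩ f ⁻¹' {y}), measurable_of_Iic fun a ↦ ?_, sInf_mem_fibre⟩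
  have preimage_Iic : (fun y ↦ sInf (T ∩ f ⁻¹' {y})) ⁻¹' Iic a =
      f '' (T ∩ Iic a) ∪ (f '' T)ᶜ ∩ {_y | 0 ≤ a} := by
    ext y
    by_cases hy : y ∈ f '' T
    · simp only [mem_union, mem_inter_iff, mem_compl_iff, hy, not_true, false_and, or_false]
      refine ⟨fun h ↦ ⟨_, ⟨(sInf_mem_fibre y hy).1, h⟩, (sInf_mem_fibre y hy).2⟩, ?_⟩
      rintro ⟨t, ⟨ht, hta⟩, hty⟩
      exact (csInf_le (isCompact_fibre y).bddBelow ⟨ht, hty⟩).trans hta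
    · have fibre_eq : T ∩ f ⁻¹' {y} = ∅ :=
        eq_empty_of_forall_notMem fun t ht ↦ hy ⟨t, ht.1, ht.2⟩
      have hya : y ∉ f '' (T ∩ Iic a) := fun h ↦ hy (image_mono inter_subset_left h)
      simp [fibre_eq, hy, hya]
  have isClosed_image {S : Set ℝ} (hS : IsCompact S) (hST : S ⊆ T) : IsClosed (f '' S) :=
    (hS.image_of_continuousOn (hf.mono hST)).isClosed
  rw [preimage_Iic]
  exact (isClosed_image (hT.inter_right isClosed_Iic) inter_subset_left).measurableSet.union
    ((isClosed_image hT subset_rfl).measurableSet.compl.inter (.const _))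

theorem exists_measurable_section_of_isCompact [TopologicalSpace Y] [T2Space Y] [BorelSpace Y]
    {P : Type*} [MetricSpace P] [MeasurableSpace P] [BorelSpace P] {K : Set P} (hK : IsCompact K)
    (hne : K.Nonempty) {f : P → Y} (hf : ContinuousOn f K) :
    ∃ s : Y → P, Measurable s ∧ ∀ y ∈ f '' K, s y ∈ K ∧ f (s y) = y := by
  have : CompactSpace K := isCompact_iff_compactSpace.1 hK
  have : Nonempty K := hne.to_subtype
  obtain ⟨φ, hφ, hφ_surj⟩ := exists_nat_bool_continuous_surjective_of_compact K
  obtain ⟨p₀, -⟩ := hne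
  classical
  let ψ : ℝ → P := fun t ↦
    if h : t ∈ cantorSet then φ (cantorSetHomeomorphNatToBool ⟨t, h⟩) else p₀
  have ψ_coe (z : cantorSet) : ψ z = φ (cantorSetHomeomorphNatToBool z) := dif_pos z.2
  have ψ_cont : Continuous fun z : cantorSet ↦ (φ (cantorSetHomeomorphNatToBool z) : P) := by
    fun_prop
  have ψ_meas : Measurable ψ := Measurable.dite (s := cantorSet)
    (f := fun z : cantorSet ↦ (φ (cantorSetHomeomorphNatToBool z) : P)) (g := fun _ ↦ p₀)
    ψ_cont.measurable measurable_const isClosed_cantorSet.measurableSet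
  have ψ_contOn : ContinuousOn ψ cantorSet := by
    rw [continuousOn_iff_continuous_domRestrict]
    exact ψ_cont.congr fun z ↦ (ψ_coe z).symm
  have ψ_mapsTo : MapsTo ψ cantorSet K := fun t ht ↦ by
    rw [ψ_coe ⟨t, ht⟩]
    exact Subtype.coe_prop _
  have ψ_surjOn : SurjOn ψ cantorSet K := fun p hp ↦ by
    obtain ⟨z, hz⟩ := hφ_surj.comp cantorSetHomeomorphNatToBool.surjective ⟨p, hp⟩
    exact ⟨z, z.2, (ψ_coe z).trans (congrArg Subtype.val hz)⟩
  obtain ⟨s, hs, hs_section⟩ := exists_measurable_section_of_isCompact_real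
    isCompact_cantorSet (hf.comp ψ_contOn ψ_mapsTo)
  refine ⟨ψ ∘ s, ψ_meas.comp hs, fun y hy ↦ ?_⟩
  rw [← ψ_surjOn.image_eq_of_mapsTo ψ_mapsTo, ← image_comp] at hy
  exact ⟨ψ_mapsTo (hs_section y hy).1, (hs_section y hy).2⟩

theorem exists_measure_image_le_measure_image_inter_add {P : Type*} (μ : Measure Y)
    [IsFiniteMeasure μ] (h : P → Y) (C : Set P) (c : P → ℕ) {δ : ℝ≥0∞} (hδ : δ ≠ 0) :
    ∃ n, μ (h '' C) ≤ μ (h '' (C ∩ {x | c x ≤ n})) + δ := by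
  have monotone_image : Monotone fun n ↦ h '' (C ∩ {x | c x ≤ n}) := fun _ _ hab ↦
    image_mono (inter_subset_inter_right _ fun _ hx ↦ le_trans hx hab)
  have iUnion_eq : ⋃ n, C ∩ {x | c x ≤ n} = C := by
    rw [← inter_iUnion, inter_eq_left]
    exact fun x _ ↦ mem_iUnion.2 ⟨c x, le_refl (c x)⟩
  have measure_eq : μ (h '' C) = ⨆ n, μ (h '' (C ∩ {x | c x ≤ n})) := by
    rw [← monotone_image.measure_iUnion, ← image_iUnion, iUnion_eq]
  by_cases h0 : μ (h '' C) = 0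
  · exact ⟨0, by simp [h0]⟩
  obtain ⟨n, hn⟩ := lt_iSup_iff.1
    ((ENNReal.sub_lt_self (measure_ne_top _ _) h0 hδ).trans_eq measure_eq)
  exact ⟨n, tsub_le_iff_right.1 hn.le⟩

theorem exists_measure_univ_le_measure_image_Iic_add [MetricSpace Y] [BorelSpace Y] (μ : Measure Y)
    [IsFiniteMeasure μ] {h : (ℕ → ℕ) → Y} (hh : Continuous h) (hsurj : Function.Surjective h)
    {ε : ℝ≥0∞} (hε : ε ≠ 0) : ∃ b, μ univ ≤ μ (h '' Iic b) + ε := by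
  obtain ⟨δ, δ_pos, tsum_δ⟩ := ENNReal.exists_pos_sum_of_countable' hε ℕ
  choose n hn using fun (k : ℕ) (C : Set (ℕ → ℕ)) ↦
    exists_measure_image_le_measure_image_inter_add μ h C (· k) (δ_pos k).ne'
  let C : ℕ → Set (ℕ → ℕ) := fun k ↦ Nat.rec univ (fun k C ↦ C ∩ {x | x k ≤ n k C}) k
  have C_anti : Antitone C := antitone_nat_of_succ_le fun k ↦ inter_subset_left
  have measure_C (k : ℕ) : μ univ ≤ μ (h '' C k) + ∑ j ∈ Finset.range k, δ j := by
    induction k with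
    | zero => simp [C, hsurj.range_eq]
    | succ k ih =>
      calc μ univ ≤ μ (h '' C k) + ∑ j ∈ Finset.range k, δ j := ih
        _ ≤ (μ (h '' C (k + 1)) + δ k) + ∑ j ∈ Finset.range k, δ j := by gcongr; exact hn k (C k)
        _ = μ (h '' C (k + 1)) + ∑ j ∈ Finset.range (k + 1), δ j := by
          rw [Finset.sum_range_succ]; ring
  have measure_closure (k : ℕ) : μ univ ≤ μ (closure (h '' C k)) + ε :=
    (measure_C k).trans <| by
      gcongr
      exacts [subset_closure, (ENNReal.sum_le_tsum _).trans tsum_δ.le]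
  have tendsto_measure : Tendsto (fun k ↦ μ (closure (h '' C k))) atTop
      (𝓝 (μ (⋂ k, closure (h '' C k)))) :=
    tendsto_measure_iInter_atTop (fun k ↦ isClosed_closure.measurableSet.nullMeasurableSet)
      (fun _ _ hab ↦ closure_mono (image_mono (C_anti hab))) ⟨0, measure_ne_top _ _⟩
  refine ⟨fun k ↦ n k (C k),
    (ge_of_tendsto' (tendsto_measure.add_const ε) measure_closure).trans ?_⟩
  gcongr
  exact iInter_closure_image_subset_image_Iic hh fun k x hx i hi ↦ (C_anti hi hx).2

theorem exists_measurable_ae_section_of_baire [MetricSpace Y] [BorelSpace Y] (μ : Measure Y)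
    [IsFiniteMeasure μ] {h : (ℕ → ℕ) → Y} (hh : Continuous h) (hsurj : Function.Surjective h) :
    ∃ s : Y → ℕ → ℕ, Measurable s ∧ ∀ᵐ y ∂μ, h (s y) = y := by
  let := PiNat.metricSpaceNatNat
  choose b hb using fun k : ℕ ↦ exists_measure_univ_le_measure_image_Iic_add μ hh hsurj
    (ENNReal.inv_ne_zero.2 (ENNReal.natCast_ne_top (k + 1)))
  have isCompact_Iic (k : ℕ) : IsCompact (Iic (b k)) := Icc_bot (a := b k) ▸ isCompact_Icc
  choose s hs hs_section using fun k ↦ exists_measurable_section_of_isCompact (isCompact_Iic k)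
    nonempty_Iic hh.continuousOn
  let A : ℕ → Set Y := fun k ↦ h '' Iic (b k)
  have A_meas (k : ℕ) : MeasurableSet (A k) := ((isCompact_Iic k).image hh).isClosed.measurableSet
  have measure_compl_iUnion : μ (⋃ k, A k)ᶜ = 0 := by
    have measure_compl_le (k : ℕ) : μ (⋃ k, A k)ᶜ ≤ ((k + 1 : ℕ) : ℝ≥0∞)⁻¹ := by
      rw [measure_compl (.iUnion A_meas) (measure_ne_top _ _), tsub_le_iff_left]
      exact (hb k).trans (by gcongr; exact subset_iUnion A k)
    exact le_antisymm (ge_of_tendsto'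
      ((tendsto_add_atTop_iff_nat 1).2 ENNReal.tendsto_inv_nat_nhds_zero) measure_compl_le) bot_le
  classical
  have exists_index (y : Y) : ∃ k, y ∈ A k ∨ y ∉ ⋃ k, A k := by
    by_cases hy : y ∈ ⋃ k, A k
    · exact (mem_iUnion.1 hy).imp fun _ ↦ Or.inl
    · exact ⟨0, Or.inr hy⟩
  refine ⟨fun y ↦ s (Nat.find (exists_index y)) y,
    Measurable.find (p := fun k y ↦ y ∈ A k ∨ y ∉ ⋃ k, A k) hs
      (fun k ↦ (A_meas k).union (MeasurableSet.iUnion A_meas).compl) exists_index, ?_⟩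
  filter_upwards [mem_ae_iff.2 measure_compl_iUnion] with y hy
  exact (hs_section _ y ((Nat.find_spec (exists_index y)).resolve_right (not_not_intro hy))).2

theorem exists_measurable_ae_section [MetricSpace Y] [BorelSpace Y] (μ : Measure Y)
    [IsFiniteMeasure μ] {P : Type*} [TopologicalSpace P] [PolishSpace P] [MeasurableSpace P]
    [BorelSpace P] {f : P → Y} (hf : Continuous f) (hsurj : Function.Surjective f) :
    ∃ s : Y → P, Measurable s ∧ ∀ᵐ y ∂μ, f (s y) = y := by
  rcases isEmpty_or_nonempty P with hP | hP
  · have : IsEmpty Y := ⟨fun y ↦ (hsurj y).elim fun p _ ↦ hP.elim p⟩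
    exact ⟨isEmptyElim, measurable_of_empty _, ae_of_all _ isEmptyElim⟩
  obtain ⟨h, hh, h_surj⟩ := PolishSpace.exists_nat_nat_continuous_surjective P
  obtain ⟨s, hs, hs_section⟩ :=
    exists_measurable_ae_section_of_baire μ (hf.comp hh) (hsurj.comp h_surj)
  exact ⟨h ∘ s, hh.measurable.comp hs, hs_section⟩

end MeasurableSelection

section OptimalCoupling

/-- The couplings of `μ` and `ν`: measures on the product with these marginals. -/
def couplings {X Y : Type*} [MeasurableSpace X] [MeasurableSpace Y] (μ : Measure X)
    (ν : Measure Y) : Set (Measure (X × Y)) :=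
  {σ | σ.map Prod.fst = μ ∧ σ.map Prod.snd = ν}

theorem isProbabilityMeasure_of_mem_couplings {X Y : Type*} [MeasurableSpace X] [MeasurableSpace Y]
    {μ : Measure X} [IsProbabilityMeasure μ] {ν : Measure Y} {σ : Measure (X × Y)}
    (hσ : σ ∈ couplings μ ν) : IsProbabilityMeasure σ :=
  (Measure.isProbabilityMeasure_map_iff measurable_fst.aemeasurable).1 (hσ.1 ▸ ‹_›)

theorem prod_mem_couplings {X Y : Type*} [MeasurableSpace X] [MeasurableSpace Y] (μ : Measure X)
    (ν : Measure Y) [IsProbabilityMeasure μ] [IsProbabilityMeasure ν] :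
    μ.prod ν ∈ couplings μ ν := by
  simp [couplings]

theorem lowerSemicontinuous_lintegral_probabilityMeasure {Ω : Type*} [MeasurableSpace Ω]
    [TopologicalSpace Ω] [OpensMeasurableSpace Ω] {c : Ω → ℝ≥0} (hc : Continuous c) :
    LowerSemicontinuous fun σ : ProbabilityMeasure Ω ↦ ∫⁻ ω, c ω ∂(σ : Measure Ω) := by
  let truncation (n : ℕ) : BoundedContinuousFunction Ω ℝ≥0 :=
    .mkOfBound ⟨fun ω ↦ min (c ω) n, by fun_prop⟩ n fun ω ω' ↦ by
      rw [NNReal.dist_eq]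
      exact abs_sub_le_of_nonneg_of_le (by positivity) (by simp) (by positivity) (by simp)
  have lintegral_eq (σ : ProbabilityMeasure Ω) :
      ∫⁻ ω, c ω ∂(σ : Measure Ω) = ⨆ n, ∫⁻ ω, truncation n ω ∂(σ : Measure Ω) := by
    have truncation_mono : Monotone fun n ω ↦ (truncation n ω : ℝ≥0∞) := fun a b hab ω ↦
      ENNReal.coe_le_coe.2 (min_le_min_left _ (Nat.cast_le.2 hab))
    rw [← lintegral_iSup (fun n ↦ (truncation n).continuous.measurable.coe_nnreal_ennreal)
      truncation_mono]
    refine lintegral_congr fun ω ↦ le_antisymm ?_ (iSup_le fun n ↦ ?_)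
    · obtain ⟨n, hn⟩ := exists_nat_ge (c ω)
      exact le_iSup_of_le n (ENNReal.coe_le_coe.2 (le_min le_rfl hn))
    · exact ENNReal.coe_le_coe.2 (min_le_left _ _)
  simp only [lintegral_eq]
  refine lowerSemicontinuous_iSup fun n ↦ Continuous.lowerSemicontinuous ?_
  exact continuous_iff_continuousAt.2 fun σ ↦
    ProbabilityMeasure.tendsto_iff_forall_lintegral_tendsto.1 tendsto_id (truncation n)

variable {X Y : Type*} [TopologicalSpace X] [PolishSpace X] [MeasurableSpace X] [BorelSpace X]
  [TopologicalSpace Y] [PolishSpace Y] [MeasurableSpace Y] [BorelSpace Y]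

theorem isCompact_couplings (μ : Measure X) (ν : Measure Y) [IsProbabilityMeasure μ]
    [IsProbabilityMeasure ν] :
    IsCompact {σ : ProbabilityMeasure (X × Y) | (σ : Measure (X × Y)) ∈ couplings μ ν} := by
  have couplings_closed :
      IsClosed {σ : ProbabilityMeasure (X × Y) | (σ : Measure (X × Y)) ∈ couplings μ ν} := by
    let marginals (σ : ProbabilityMeasure (X × Y)) : ProbabilityMeasure X × ProbabilityMeasure Y :=
      (σ.map measurable_fst.aemeasurable, σ.map measurable_snd.aemeasurable)
    have marginals_cont : Continuous marginals :=
      (ProbabilityMeasure.continuous_map continuous_fst).prodMk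
        (ProbabilityMeasure.continuous_map continuous_snd)
    have preimage_eq : {σ : ProbabilityMeasure (X × Y) | (σ : Measure (X × Y)) ∈ couplings μ ν} =
        marginals ⁻¹' {(⟨μ, ‹_›⟩, ⟨ν, ‹_›⟩)} := by
      ext σ
      exact ⟨fun h ↦ Prod.ext (Subtype.ext h.1) (Subtype.ext h.2), fun h ↦
        ⟨congrArg (fun p ↦ (p.1 : Measure X)) h, congrArg (fun p ↦ (p.2 : Measure Y)) h⟩⟩
    exact preimage_eq ▸ isClosed_singleton.preimage marginals_cont
  have couplings_tight : IsTightMeasureSet {((σ : ProbabilityMeasure (X × Y)) : Measure (X × Y)) |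
      σ ∈ {σ : ProbabilityMeasure (X × Y) | (σ : Measure (X × Y)) ∈ couplings μ ν}} := by
    refine .prodMk ((isTightMeasureSet_singleton (μ := μ)).subset ?_)
      ((isTightMeasureSet_singleton (μ := ν)).subset ?_)
    · rintro _ ⟨_, ⟨σ, hσ, rfl⟩, rfl⟩
      exact hσ.1
    · rintro _ ⟨_, ⟨σ, hσ, rfl⟩, rfl⟩
      exact hσ.2
  let := TopologicalSpace.upgradeIsCompletelyMetrizable X
  let := TopologicalSpace.upgradeIsCompletelyMetrizable Y
  exact couplings_closed.closure_eq ▸ isCompact_closure_of_isTightMeasureSet couplings_tight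

theorem exists_isMinOn_couplings (μ : Measure X) (ν : Measure Y) [IsProbabilityMeasure μ]
    [IsProbabilityMeasure ν] {c : X × Y → ℝ≥0} (hc : Continuous c) :
    ∃ σ ∈ couplings μ ν, IsMinOn (fun σ ↦ ∫⁻ p, c p ∂σ) (couplings μ ν) σ := by
  obtain ⟨σ, hσ, hσ_min⟩ := LowerSemicontinuousOn.exists_isMinOn
    ⟨⟨μ.prod ν, inferInstance⟩, prod_mem_couplings μ ν⟩ (isCompact_couplings μ ν)
    ((lowerSemicontinuous_lintegral_probabilityMeasure hc).lowerSemicontinuousOn _)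
  exact ⟨σ, hσ, fun τ hτ ↦
    @hσ_min ⟨τ, isProbabilityMeasure_of_mem_couplings hτ⟩ hτ⟩

end OptimalCoupling

section Wasserstein

theorem W2sq_le_lintegral_of_mem_couplings {X : Type*} [MetricSpace X] [MeasurableSpace X]
    {μ ν : Measure X} {σ : Measure (X × X)} (hσ : σ ∈ couplings μ ν) :
    W2sq μ ν ≤ ∫⁻ p, edist p.1 p.2 ^ 2 ∂σ :=
  iInf₂_le σ hσ

theorem exists_measure_map_fst_map_snd_of_map_snd_eq {X Y Z : Type*} [MeasurableSpace X]
    [MeasurableSpace Y] [MeasurableSpace Z] [StandardBorelSpace Z] [Nonempty Z]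
    (σ : Measure (X × Y)) [SFinite σ] (τ : Measure (Y × Z)) [IsFiniteMeasure τ]
    (h : σ.map Prod.snd = τ.map Prod.fst) :
    ∃ ρ : Measure ((X × Y) × Z), ρ.map Prod.fst = σ ∧ ρ.map (fun p ↦ (p.1.2, p.2)) = τ := by
  refine ⟨σ ⊗ₘ τ.condKernel.comap Prod.snd measurable_snd, Measure.fst_compProd _ _,
    Measure.ext_of_lintegral _ fun f hf ↦ ?_⟩
  rw [lintegral_map hf (by fun_prop), Measure.lintegral_compProd (by fun_prop)]
  conv_rhs => rw [← τ.disintegrate τ.condKernel, Measure.lintegral_compProd hf, Measure.fst, ← h,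
    lintegral_map (by fun_prop) (by fun_prop)]
  rfl

variable {X : Type*} [MetricSpace X] [CompleteSpace X] [SecondCountableTopology X]
  [MeasurableSpace X] [BorelSpace X]

theorem exists_mem_couplings_lintegral_eq_W2sq (μ ν : Measure X) [IsProbabilityMeasure μ]
    [IsProbabilityMeasure ν] :
    ∃ σ ∈ couplings μ ν, ∫⁻ p, edist p.1 p.2 ^ 2 ∂σ = W2sq μ ν := by
  obtain ⟨σ, hσ, hσ_min⟩ := exists_isMinOn_couplings μ ν
    (c := fun p ↦ nndist p.1 p.2 ^ 2) (by fun_prop)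
  simp only [ENNReal.coe_pow, ← edist_nndist] at hσ_min
  exact ⟨σ, hσ, le_antisymm (le_iInf₂ fun τ hτ ↦ hσ_min hτ) (W2sq_le_lintegral_of_mem_couplings hσ)⟩

theorem W2_triangle (μ ν ξ : Measure X) [IsProbabilityMeasure μ] [IsProbabilityMeasure ν]
    [IsProbabilityMeasure ξ] : W2 μ ξ ≤ W2 μ ν + W2 ν ξ := by
  obtain ⟨σ, hσ, cost_σ⟩ := exists_mem_couplings_lintegral_eq_W2sq μ ν
  obtain ⟨τ, hτ, cost_τ⟩ := exists_mem_couplings_lintegral_eq_W2sq ν ξ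
  have : IsProbabilityMeasure σ := isProbabilityMeasure_of_mem_couplings hσ
  have : IsProbabilityMeasure τ := isProbabilityMeasure_of_mem_couplings hτ
  have : Nonempty X := nonempty_of_isProbabilityMeasure μ
  obtain ⟨ρ, rfl, rfl⟩ := exists_measure_map_fst_map_snd_of_map_snd_eq σ τ (hσ.2.trans hτ.1.symm)
  have coupling_outer : ρ.map (fun p ↦ (p.1.1, p.2)) ∈ couplings μ ξ := by
    constructor
    · rw [Measure.map_map (by fun_prop) (by fun_prop), ← hσ.1,
        Measure.map_map (by fun_prop) (by fun_prop)]
      rfl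
    · rw [Measure.map_map (by fun_prop) (by fun_prop), ← hτ.2,
        Measure.map_map (by fun_prop) (by fun_prop)]
      rfl
  have W2sq_outer_le : W2sq μ ξ ≤ ∫⁻ p, edist p.1.1 p.2 ^ 2 ∂ρ :=
    (W2sq_le_lintegral_of_mem_couplings coupling_outer).trans_eq
      (lintegral_map (by fun_prop) (by fun_prop))
  rw [lintegral_map (by fun_prop) (by fun_prop)] at cost_σ cost_τ
  have minkowski := ENNReal.lintegral_Lp_add_le (μ := ρ) (p := 2)
    (f := fun p ↦ edist p.1.1 p.1.2) (g := fun p ↦ edist p.1.2 p.2)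
    (by fun_prop) (by fun_prop) one_le_two
  simp only [Pi.add_apply, ENNReal.rpow_two, cost_σ, cost_τ] at minkowski
  calc W2 μ ξ ≤ (∫⁻ p, edist p.1.1 p.2 ^ 2 ∂ρ) ^ (1 / 2 : ℝ) := by
        unfold W2; gcongr
    _ ≤ (∫⁻ p, (edist p.1.1 p.1.2 + edist p.1.2 p.2) ^ 2 ∂ρ) ^ (1 / 2 : ℝ) := by
        gcongr; exact edist_triangle _ _ _
    _ ≤ W2 μ ν + W2 ν ξ := minkowski

end Wasserstein

section Geodesics

/-- The constant-speed geodesics of `X`, as a subset of `C([0,1], X)` so that Borel measures on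
them are available. -/
def geodesics (X : Type*) [MetricSpace X] : Set C(unitInterval, X) :=
  {γ | ∀ s t : unitInterval, dist (γ s) (γ t) = |(s : ℝ) - t| * dist (γ 0) (γ 1)}

/-- Evaluation at time `t`, with `t` clamped to `[0,1]` so that every real time is allowed. -/
noncomputable def evalAt {X : Type*} [TopologicalSpace X] (t : ℝ) (γ : C(unitInterval, X)) : X :=
  γ (projIcc 0 1 zero_le_one t)

@[fun_prop]
theorem continuous_evalAt {X : Type*} [TopologicalSpace X] (t : ℝ) :
    Continuous (evalAt (X := X) t) := by
  unfold evalAt; fun_prop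

@[fun_prop]
theorem measurable_evalAt {X : Type*} [TopologicalSpace X] [MeasurableSpace X] [BorelSpace X]
    [MeasurableSpace C(unitInterval, X)] [BorelSpace C(unitInterval, X)] (t : ℝ) :
    Measurable (evalAt (X := X) t) :=
  (continuous_evalAt t).measurable

variable {X : Type*} [MetricSpace X]

theorem isClosed_geodesics : IsClosed (geodesics X) := by
  simp only [geodesics, ofPred_forall]
  exact isClosed_iInter fun s ↦ isClosed_iInter fun t ↦ isClosed_eq (by fun_prop) (by fun_prop)

theorem exists_mem_geodesics (hgeo : IsGeodesicSpace X) (x y : X) :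
    ∃ γ ∈ geodesics X, evalAt 0 γ = x ∧ evalAt 1 γ = y := by
  obtain ⟨γ, hγ, rfl, rfl⟩ := hgeo x y
  have dist_eq (s t : unitInterval) : dist (γ s) (γ t) = |(s : ℝ) - t| * dist (γ 0) (γ 1) :=
    hγ s s.2 t t.2
  have lipschitz : LipschitzWith (dist (γ 0) (γ 1)).toNNReal fun s : unitInterval ↦ γ s :=
    LipschitzWith.of_dist_le_mul fun s t ↦ by
      rw [dist_eq, Real.coe_toNNReal _ dist_nonneg, mul_comm]
      rfl
  refine ⟨⟨_, lipschitz.continuous⟩, fun s t ↦ ?_, ?_, ?_⟩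
  · simpa using dist_eq s t
  · simp [evalAt]
  · simp [evalAt]

theorem dist_evalAt {γ : C(unitInterval, X)} (hγ : γ ∈ geodesics X) {s t : ℝ}
    (hs : s ∈ Icc (0 : ℝ) 1) (ht : t ∈ Icc (0 : ℝ) 1) :
    dist (evalAt s γ) (evalAt t γ) = |s - t| * dist (evalAt 0 γ) (evalAt 1 γ) := by
  simpa [evalAt, projIcc_of_mem _ hs, projIcc_of_mem _ ht] using hγ ⟨s, hs⟩ ⟨t, ht⟩

variable [CompleteSpace X] [SecondCountableTopology X] [MeasurableSpace X] [BorelSpace X]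
  [MeasurableSpace C(unitInterval, X)] [BorelSpace C(unitInterval, X)]

theorem exists_measure_geodesics_map_endpoints_eq (hgeo : IsGeodesicSpace X)
    (σ : Measure (X × X)) [IsFiniteMeasure σ] :
    ∃ π : Measure C(unitInterval, X), (∀ᵐ γ ∂π, γ ∈ geodesics X) ∧
      π.map (fun γ ↦ (evalAt 0 γ, evalAt 1 γ)) = σ := by
  have : PolishSpace (geodesics X) := isClosed_geodesics.polishSpace
  let endpoints (γ : C(unitInterval, X)) : X × X := (evalAt 0 γ, evalAt 1 γ)
  have endpoints_cont : Continuous endpoints := by fun_prop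
  have endpoints_surj : Function.Surjective fun γ : geodesics X ↦ endpoints γ := fun p ↦ by
    obtain ⟨γ, hγ, h0, h1⟩ := exists_mem_geodesics hgeo p.1 p.2
    exact ⟨⟨γ, hγ⟩, Prod.ext h0 h1⟩
  obtain ⟨s, hs, hs_section⟩ := exists_measurable_ae_section σ
    (endpoints_cont.comp continuous_subtype_val) endpoints_surj
  have coe_s_meas : Measurable fun p ↦ (s p : C(unitInterval, X)) := measurable_subtype_coe.comp hs
  refine ⟨σ.map fun p ↦ s p, ?_, ?_⟩
  · exact (ae_map_iff coe_s_meas.aemeasurable isClosed_geodesics.measurableSet).2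
      (ae_of_all _ fun p ↦ (s p).2)
  · rw [Measure.map_map endpoints_cont.measurable coe_s_meas]
    exact (Measure.map_congr hs_section).trans Measure.map_id

end Geodesics

section OptimalDynamicalPlan

/-- A probability measure on geodesics whose endpoints are optimally coupled, with finite cost;
it induces the Wasserstein geodesic `t ↦ π.map (evalAt t)`. -/
structure IsOptimalDynamicalPlan {X : Type*} [MetricSpace X] [MeasurableSpace X]
    [MeasurableSpace C(unitInterval, X)] (π : Measure C(unitInterval, X)) : Prop where
  isProbabilityMeasure : IsProbabilityMeasure π
  ae_mem_geodesics : ∀ᵐ γ ∂π, γ ∈ geodesics X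
  lintegral_cost_le : ∫⁻ γ, edist (evalAt 0 γ) (evalAt 1 γ) ^ 2 ∂π ≤
    W2sq (π.map (evalAt 0)) (π.map (evalAt 1))
  lintegral_cost_ne_top : ∫⁻ γ, edist (evalAt 0 γ) (evalAt 1 γ) ^ 2 ∂π ≠ ∞

theorem W2_symm {X : Type*} [MetricSpace X] [SecondCountableTopology X] [MeasurableSpace X]
    [BorelSpace X] (μ ν : Measure X) : W2 μ ν = W2 ν μ := by
  have W2sq_le (μ ν : Measure X) : W2sq μ ν ≤ W2sq ν μ := by
    refine le_iInf₂ fun σ hσ ↦ ?_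
    have swap_mem : σ.map Prod.swap ∈ couplings μ ν := by
      constructor
      · rw [Measure.map_map measurable_fst measurable_swap]; exact hσ.2
      · rw [Measure.map_map measurable_snd measurable_swap]; exact hσ.1
    refine (W2sq_le_lintegral_of_mem_couplings swap_mem).trans_eq ?_
    simp only [lintegral_map (f := fun p : X × X ↦ edist p.1 p.2 ^ 2) (by fun_prop) measurable_swap,
      Prod.fst_swap, Prod.snd_swap, edist_comm]
  unfold W2
  rw [(W2sq_le μ ν).antisymm (W2sq_le ν μ)]

theorem smul_W2sq_le {X : Type*} [MetricSpace X] [MeasurableSpace X] (μ ν : Measure X) {c : ℝ≥0∞}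
    (hc₀ : c ≠ 0) (hc : c ≠ ∞) : c * W2sq μ ν ≤ W2sq (c • μ) (c • ν) := by
  refine le_iInf₂ fun σ hσ ↦ ?_
  have smul_mem : c⁻¹ • σ ∈ couplings μ ν := by
    constructor
    · rw [Measure.map_smul, hσ.1, smul_smul, ENNReal.inv_mul_cancel hc₀ hc, one_smul]
    · rw [Measure.map_smul, hσ.2, smul_smul, ENNReal.inv_mul_cancel hc₀ hc, one_smul]
  calc c * W2sq μ ν ≤ c * ∫⁻ p, edist p.1 p.2 ^ 2 ∂(c⁻¹ • σ) := by
        gcongr; exact W2sq_le_lintegral_of_mem_couplings smul_mem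
    _ = ∫⁻ p, edist p.1 p.2 ^ 2 ∂σ := by
        rw [lintegral_smul_measure, smul_eq_mul, ← mul_assoc, ENNReal.mul_inv_cancel hc₀ hc,
          one_mul]

theorem lintegral_le_W2sq_of_add {X : Type*} [MetricSpace X] [MeasurableSpace X]
    {σ τ : Measure (X × X)}
    (hopt : ∫⁻ p, edist p.1 p.2 ^ 2 ∂(σ + τ) ≤
      W2sq ((σ + τ).map Prod.fst) ((σ + τ).map Prod.snd))
    (hτ : ∫⁻ p, edist p.1 p.2 ^ 2 ∂τ ≠ ∞) :
    ∫⁻ p, edist p.1 p.2 ^ 2 ∂σ ≤ W2sq (σ.map Prod.fst) (σ.map Prod.snd) := by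
  refine le_iInf₂ fun σ' hσ' ↦ ?_
  have add_mem : σ' + τ ∈ couplings ((σ + τ).map Prod.fst) ((σ + τ).map Prod.snd) := by
    constructor
    · rw [Measure.map_add _ _ measurable_fst, Measure.map_add _ _ measurable_fst, hσ'.1]
    · rw [Measure.map_add _ _ measurable_snd, Measure.map_add _ _ measurable_snd, hσ'.2]
  have cost_le := hopt.trans (W2sq_le_lintegral_of_mem_couplings add_mem)
  rw [lintegral_add_measure, lintegral_add_measure] at cost_le
  exact (ENNReal.add_le_add_iff_right hτ).1 cost_le

variable {X : Type*} [MetricSpace X] [MeasurableSpace X] [BorelSpace X]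
  [MeasurableSpace C(unitInterval, X)] [BorelSpace C(unitInterval, X)]

theorem map_evalAt_pair_mem_couplings (π : Measure C(unitInterval, X)) (s t : ℝ) :
    π.map (fun γ ↦ (evalAt s γ, evalAt t γ)) ∈
      couplings (π.map (evalAt s)) (π.map (evalAt t)) :=
  ⟨Measure.map_map measurable_fst (by fun_prop), Measure.map_map measurable_snd (by fun_prop)⟩

theorem IsOptimalDynamicalPlan.isProbabilityMeasure_map_evalAt {π : Measure C(unitInterval, X)}
    (hπ : IsOptimalDynamicalPlan π) (t : ℝ) : IsProbabilityMeasure (π.map (evalAt t)) :=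
  have := hπ.isProbabilityMeasure
  Measure.isProbabilityMeasure_map (measurable_evalAt t).aemeasurable

variable [SecondCountableTopology X]

theorem lintegral_map_evalAt_pair (π : Measure C(unitInterval, X)) (s t : ℝ) :
    ∫⁻ p, edist p.1 p.2 ^ 2 ∂(π.map fun γ ↦ (evalAt s γ, evalAt t γ)) =
      ∫⁻ γ, edist (evalAt s γ) (evalAt t γ) ^ 2 ∂π :=
  lintegral_map (by fun_prop) (by fun_prop)

theorem W2sq_map_evalAt_le (π : Measure C(unitInterval, X)) (s t : ℝ) :
    W2sq (π.map (evalAt s)) (π.map (evalAt t)) ≤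
      ∫⁻ γ, edist (evalAt s γ) (evalAt t γ) ^ 2 ∂π :=
  (W2sq_le_lintegral_of_mem_couplings (map_evalAt_pair_mem_couplings π s t)).trans_eq
    (lintegral_map_evalAt_pair π s t)

namespace IsOptimalDynamicalPlan

theorem W2_map_evalAt_le {π : Measure C(unitInterval, X)} (hπ : IsOptimalDynamicalPlan π) {s t : ℝ}
    (hs : s ∈ Icc (0 : ℝ) 1) (ht : t ∈ Icc (0 : ℝ) 1) :
    W2 (π.map (evalAt s)) (π.map (evalAt t)) ≤
      ENNReal.ofReal |s - t| * W2 (π.map (evalAt 0)) (π.map (evalAt 1)) := by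
  have W2sq_le : W2sq (π.map (evalAt s)) (π.map (evalAt t)) ≤
      ENNReal.ofReal |s - t| ^ 2 * W2sq (π.map (evalAt 0)) (π.map (evalAt 1)) :=
    calc W2sq (π.map (evalAt s)) (π.map (evalAt t))
        ≤ ∫⁻ γ, edist (evalAt s γ) (evalAt t γ) ^ 2 ∂π := W2sq_map_evalAt_le π s t
      _ = ∫⁻ γ, ENNReal.ofReal |s - t| ^ 2 * edist (evalAt 0 γ) (evalAt 1 γ) ^ 2 ∂π := by
          refine lintegral_congr_ae (hπ.ae_mem_geodesics.mono fun γ hγ ↦ ?_)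
          simp only [edist_dist, dist_evalAt hγ hs ht, ENNReal.ofReal_mul (abs_nonneg _), mul_pow]
      _ = ENNReal.ofReal |s - t| ^ 2 * ∫⁻ γ, edist (evalAt 0 γ) (evalAt 1 γ) ^ 2 ∂π :=
          lintegral_const_mul _ (by fun_prop)
      _ ≤ ENNReal.ofReal |s - t| ^ 2 * W2sq (π.map (evalAt 0)) (π.map (evalAt 1)) := by
          gcongr; exact hπ.lintegral_cost_le
  calc W2 (π.map (evalAt s)) (π.map (evalAt t))
      ≤ (ENNReal.ofReal |s - t| ^ 2 * W2sq (π.map (evalAt 0)) (π.map (evalAt 1))) ^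
          (1 / 2 : ℝ) := by
        unfold W2; gcongr
    _ = ENNReal.ofReal |s - t| * W2 (π.map (evalAt 0)) (π.map (evalAt 1)) := by
        rw [ENNReal.mul_rpow_of_nonneg _ _ (by norm_num), ← ENNReal.rpow_natCast,
          ← ENNReal.rpow_mul, Nat.cast_ofNat, mul_one_div_cancel two_ne_zero, ENNReal.rpow_one, W2]

theorem W2_ne_top {π : Measure C(unitInterval, X)} (hπ : IsOptimalDynamicalPlan π) :
    W2 (π.map (evalAt 0)) (π.map (evalAt 1)) ≠ ∞ :=
  ENNReal.rpow_ne_top_of_nonneg (by norm_num)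
    (ne_top_of_le_ne_top hπ.lintegral_cost_ne_top (W2sq_map_evalAt_le π 0 1))

theorem le_W2_map_evalAt [CompleteSpace X] {π : Measure C(unitInterval, X)}
    (hπ : IsOptimalDynamicalPlan π) {s t : ℝ} (hs : 0 ≤ s) (hst : s ≤ t) (ht : t ≤ 1) :
    ENNReal.ofReal |s - t| * W2 (π.map (evalAt 0)) (π.map (evalAt 1)) ≤
      W2 (π.map (evalAt s)) (π.map (evalAt t)) := by
  have := hπ.isProbabilityMeasure_map_evalAt
  set L := W2 (π.map (evalAt 0)) (π.map (evalAt 1))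
  have triangle : L ≤ ENNReal.ofReal |0 - s| * L +
      (W2 (π.map (evalAt s)) (π.map (evalAt t)) + ENNReal.ofReal |t - 1| * L) := by
    refine (W2_triangle _ (π.map (evalAt s)) _).trans (add_le_add ?_ ?_)
    · exact hπ.W2_map_evalAt_le (left_mem_Icc.2 zero_le_one) ⟨hs, hst.trans ht⟩
    · refine (W2_triangle _ (π.map (evalAt t)) _).trans (add_le_add le_rfl ?_)
      exact hπ.W2_map_evalAt_le ⟨hs.trans hst, ht⟩ (right_mem_Icc.2 zero_le_one)
  have split_L : L = ENNReal.ofReal |0 - s| * L + (ENNReal.ofReal |s - t| * L +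
      ENNReal.ofReal |t - 1| * L) := by
    rw [← add_mul, ← add_mul, ← ENNReal.ofReal_add (abs_nonneg _) (abs_nonneg _),
      ← ENNReal.ofReal_add (abs_nonneg _) (by positivity), abs_of_nonpos (by linarith),
      abs_of_nonpos (by linarith), abs_of_nonpos (by linarith)]
    ring_nf
    simp
  have ofReal_mul_L_ne_top (a : ℝ) : ENNReal.ofReal a * L ≠ ∞ :=
    ENNReal.mul_ne_top ENNReal.ofReal_ne_top hπ.W2_ne_top
  have cancel_left := (ENNReal.add_le_add_iff_left (ofReal_mul_L_ne_top |0 - s|)).1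
    (split_L.symm.trans_le triangle)
  exact (ENNReal.add_le_add_iff_right (ofReal_mul_L_ne_top |t - 1|)).1 cancel_left

theorem isW2Geodesic [CompleteSpace X] {π : Measure C(unitInterval, X)}
    (hπ : IsOptimalDynamicalPlan π) : IsW2Geodesic fun t ↦ π.map (evalAt t) := by
  refine ⟨fun t _ ↦ hπ.isProbabilityMeasure_map_evalAt t, hπ.W2_ne_top, fun s hs t ht ↦
    le_antisymm (hπ.W2_map_evalAt_le hs ht) ?_⟩
  rcases le_total s t with hst | hts
  · exact hπ.le_W2_map_evalAt hs.1 hst ht.2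
  · rw [abs_sub_comm]
    exact (hπ.le_W2_map_evalAt ht.1 hts hs.2).trans_eq (W2_symm _ _)

theorem cond {π : Measure C(unitInterval, X)} (hπ : IsOptimalDynamicalPlan π)
    {A : Set C(unitInterval, X)} (hA : MeasurableSet A) (hA₀ : π A ≠ 0) :
    IsOptimalDynamicalPlan π[|A] := by
  have := hπ.isProbabilityMeasure
  have map_restrict_add (s t : ℝ) : (π.restrict A).map (fun γ ↦ (evalAt s γ, evalAt t γ)) +
      (π.restrict Aᶜ).map (fun γ ↦ (evalAt s γ, evalAt t γ)) =
        π.map fun γ ↦ (evalAt s γ, evalAt t γ) := by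
    rw [← Measure.map_add _ _ (by fun_prop), Measure.restrict_add_restrict_compl hA]
  have restrict_opt : ∫⁻ γ in A, edist (evalAt 0 γ) (evalAt 1 γ) ^ 2 ∂π ≤
      W2sq ((π.restrict A).map (evalAt 0)) ((π.restrict A).map (evalAt 1)) := by
    have := lintegral_le_W2sq_of_add (σ := (π.restrict A).map fun γ ↦ (evalAt 0 γ, evalAt 1 γ))
      (τ := (π.restrict Aᶜ).map fun γ ↦ (evalAt 0 γ, evalAt 1 γ))
    rw [map_restrict_add, lintegral_map_evalAt_pair, lintegral_map_evalAt_pair,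
      lintegral_map_evalAt_pair, (map_evalAt_pair_mem_couplings _ _ _).1,
      (map_evalAt_pair_mem_couplings _ _ _).2, (map_evalAt_pair_mem_couplings _ _ _).1,
      (map_evalAt_pair_mem_couplings _ _ _).2] at this
    exact this hπ.lintegral_cost_le
      (ne_top_of_le_ne_top hπ.lintegral_cost_ne_top (setLIntegral_le_lintegral _ _))
  have inv_ne_top : (π A)⁻¹ ≠ ∞ := ENNReal.inv_ne_top.2 hA₀
  have cost_cond : ∫⁻ γ, edist (evalAt 0 γ) (evalAt 1 γ) ^ 2 ∂π[|A] =
      (π A)⁻¹ * ∫⁻ γ in A, edist (evalAt 0 γ) (evalAt 1 γ) ^ 2 ∂π :=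
    lintegral_smul_measure _ _
  refine ⟨cond_isProbabilityMeasure hA₀,
    Measure.ae_smul_measure (ae_restrict_of_ae hπ.ae_mem_geodesics) _, ?_, ?_⟩
  · rw [cost_cond, ProbabilityTheory.cond, Measure.map_smul, Measure.map_smul]
    exact (by gcongr : _ ≤ _).trans (smul_W2sq_le _ _ (ENNReal.inv_ne_zero.2 (measure_ne_top _ _))
      inv_ne_top)
  · rw [cost_cond]
    exact ENNReal.mul_ne_top inv_ne_top
      (ne_top_of_le_ne_top hπ.lintegral_cost_ne_top (setLIntegral_le_lintegral _ _))

end IsOptimalDynamicalPlan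

theorem exists_isOptimalDynamicalPlan [CompleteSpace X] (hgeo : IsGeodesicSpace X)
    (μ ν : Measure X) [IsProbabilityMeasure μ] [IsProbabilityMeasure ν] (hfin : W2sq μ ν ≠ ∞) :
    ∃ π : Measure C(unitInterval, X), IsOptimalDynamicalPlan π ∧ π.map (evalAt 0) = μ ∧
      π.map (evalAt 1) = ν := by
  obtain ⟨σ, ⟨rfl, rfl⟩, cost_σ⟩ := exists_mem_couplings_lintegral_eq_W2sq μ ν
  have : IsProbabilityMeasure σ := isProbabilityMeasure_of_mem_couplings ⟨rfl, rfl⟩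
  obtain ⟨π, hπ, rfl⟩ := exists_measure_geodesics_map_endpoints_eq hgeo σ
  have marginals := map_evalAt_pair_mem_couplings π 0 1
  rw [lintegral_map_evalAt_pair, marginals.1, marginals.2] at cost_σ
  rw [marginals.1, marginals.2] at hfin
  exact ⟨π, ⟨(Measure.isProbabilityMeasure_map_iff (by fun_prop)).1 this, hπ, cost_σ.le,
    cost_σ ▸ hfin⟩, marginals.1.symm, marginals.2.symm⟩

end OptimalDynamicalPlan

section RenyiEntropy

/-- The negative `-E_N` of the Rényi entropy functional, kept as a value in `[0,∞]` where it is
concave along Wasserstein geodesics. -/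
noncomputable def negRenyiEntropy {X : Type*} [MeasurableSpace X] (N : ℝ) (m μ : Measure X) :
    ℝ≥0∞ :=
  ∫⁻ x, renyiIntegrand N (μ.rnDeriv m x) ∂m

theorem StronglyDisplacementConvex.negRenyiEntropy_concave {X : Type*} [MetricSpace X]
    [MeasurableSpace X] {N : ℝ} {m : Measure X}
    (hsdc : StronglyDisplacementConvex (renyiEntropy N m)) {Γ : ℝ → Measure X}
    (hΓ : IsW2Geodesic Γ) {t : ℝ} (ht : t ∈ Icc (0 : ℝ) 1) :
    ENNReal.ofReal (1 - t) * negRenyiEntropy N m (Γ 0) +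
      ENNReal.ofReal t * negRenyiEntropy N m (Γ 1) ≤ negRenyiEntropy N m (Γ t) := by
  have convex : -(negRenyiEntropy N m (Γ t) : EReal) ≤
      ((1 - t : ℝ) : EReal) * -(negRenyiEntropy N m (Γ 0) : EReal) +
        (t : EReal) * -(negRenyiEntropy N m (Γ 1) : EReal) := hsdc Γ hΓ t ht
  have coe_eq {a : ℝ} (ha : 0 ≤ a) : (a : EReal) = (ENNReal.ofReal a : EReal) := by
    rw [EReal.coe_ennreal_ofReal, max_eq_left ha]
  rw [coe_eq (sub_nonneg.2 ht.2), coe_eq ht.1, mul_neg, mul_neg, ← sub_eq_add_neg,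
    ← EReal.coe_ennreal_mul, ← EReal.coe_ennreal_mul,
    ← EReal.neg_add (.inl (EReal.coe_ennreal_ne_bot _)) (.inr (EReal.coe_ennreal_ne_bot _)),
    EReal.neg_le_neg_iff, ← EReal.coe_ennreal_add] at convex
  exact_mod_cast convex

theorem renyiIntegrand_le (N : ℝ) (ρ : ℝ≥0∞) : renyiIntegrand N ρ ≤ ρ ^ (1 - 1 / N) := by
  unfold renyiIntegrand
  split_ifs <;> simp

theorem negRenyiEntropy_le_measure_rpow {X : Type*} [MeasurableSpace X] {N : ℝ} (hN : 1 ≤ N)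
    (m μ : Measure X) [IsProbabilityMeasure μ] {E : Set X} (hE : MeasurableSet E)
    (hμE : μ Eᶜ = 0) : negRenyiEntropy N m μ ≤ m E ^ (1 / N) := by
  have one_div_le : 1 / N ≤ 1 := div_le_one_of_le₀ hN (by positivity)
  have rnDeriv_eq_zero : ∀ᵐ x ∂m.restrict Eᶜ, μ.rnDeriv m x = 0 :=
    (lintegral_eq_zero_iff (Measure.measurable_rnDeriv μ m)).1
      (le_zero_iff.1 ((Measure.setLIntegral_rnDeriv_le _).trans_eq hμE))
  have integral_compl : ∫⁻ x in Eᶜ, renyiIntegrand N (μ.rnDeriv m x) ∂m = 0 :=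
    lintegral_eq_zero_of_ae_eq_zero (rnDeriv_eq_zero.mono fun x hx ↦ by simp [renyiIntegrand, hx])
  calc negRenyiEntropy N m μ = ∫⁻ x in E, renyiIntegrand N (μ.rnDeriv m x) ∂m := by
        rw [negRenyiEntropy, ← lintegral_add_compl _ hE, integral_compl, add_zero]
    _ ≤ ∫⁻ x in E, μ.rnDeriv m x ^ (1 - 1 / N) * (1 : ℝ≥0∞) ^ (1 / N) ∂m :=
        lintegral_mono fun x ↦ by simpa using renyiIntegrand_le N _
    _ ≤ (∫⁻ x in E, μ.rnDeriv m x ∂m) ^ (1 - 1 / N) * (∫⁻ _ in E, 1 ∂m) ^ (1 / N) :=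
        ENNReal.lintegral_mul_norm_pow_le (Measure.measurable_rnDeriv μ m).aemeasurable
          aemeasurable_const (by linarith) (by positivity) (by ring)
    _ ≤ 1 ^ (1 - 1 / N) * m E ^ (1 / N) := by
        gcongr
        · exact (Measure.setLIntegral_rnDeriv_le _).trans prob_le_one
        · simp
    _ = m E ^ (1 / N) := by simp

theorem rpow_le_negRenyiEntropy_of_smul_le {X : Type*} [MeasurableSpace X] {N : ℝ} (hN : 1 ≤ N)
    (m μ : Measure X) [SigmaFinite m] [IsProbabilityMeasure μ] {a : ℝ≥0∞} (h : a • μ ≤ m) :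
    a ^ (1 / N) ≤ negRenyiEntropy N m μ := by
  have one_div_le : 1 / N ≤ 1 := div_le_one_of_le₀ hN (by positivity)
  rcases eq_or_ne a 0 with rfl | ha
  · simp [show 0 < N by linarith]
  have hac : μ ≪ m := fun s hs ↦ by simpa [ha] using (h s).trans_eq hs
  have mul_rnDeriv_le : ∀ᵐ x ∂m, a * μ.rnDeriv m x ≤ 1 := by
    refine ae_le_of_forall_setLIntegral_le_of_sigmaFinite (by fun_prop) fun s _ _ ↦ ?_
    rw [lintegral_const_mul _ (by fun_prop), Measure.setLIntegral_rnDeriv hac s]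
    simpa using h s
  calc a ^ (1 / N) = ∫⁻ x, a ^ (1 / N) * μ.rnDeriv m x ∂m := by
        rw [lintegral_const_mul _ (by fun_prop), Measure.lintegral_rnDeriv hac, measure_univ,
          mul_one]
    _ ≤ negRenyiEntropy N m μ := lintegral_mono_ae (mul_rnDeriv_le.mono fun x hx ↦ ?_)
  unfold renyiIntegrand
  split_ifs with hρ
  · simp [hρ]
  set ρ := μ.rnDeriv m x
  calc a ^ (1 / N) * ρ = (a * ρ) ^ (1 / N) * ρ ^ (1 - 1 / N) := by
        rw [ENNReal.mul_rpow_of_nonneg _ _ (by positivity), mul_assoc,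
          ← ENNReal.rpow_add_of_nonneg _ _ (by positivity) (by linarith), add_sub_cancel,
          ENNReal.rpow_one]
    _ ≤ 1 * ρ ^ (1 - 1 / N) := by
        gcongr
        exact ENNReal.rpow_le_one hx (by positivity)
    _ = ρ ^ (1 - 1 / N) := one_mul _

theorem measure_smul_cond_le {Ω : Type*} [MeasurableSpace Ω] (μ : Measure Ω) (A : Set Ω) :
    μ A • μ[|A] ≤ μ :=
  calc μ A • μ[|A] = (μ A * (μ A)⁻¹) • μ.restrict A := by rw [ProbabilityTheory.cond, smul_smul]
    _ ≤ (1 : ℝ≥0∞) • μ.restrict A := by gcongr; exact ENNReal.mul_inv_le_one _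
    _ ≤ μ := (one_smul ℝ≥0∞ (μ.restrict A)).trans_le Measure.restrict_le_self

theorem IsOptimalDynamicalPlan.rpow_smul_map_evalAt_le {X : Type*} [MetricSpace X]
    [CompleteSpace X] [SecondCountableTopology X] [MeasurableSpace X] [BorelSpace X]
    [MeasurableSpace C(unitInterval, X)] [BorelSpace C(unitInterval, X)] {N : ℝ} (hN : 1 ≤ N)
    {m : Measure X} [SigmaFinite m] (hsdc : StronglyDisplacementConvex (renyiEntropy N m))
    {π : Measure C(unitInterval, X)} (hπ : IsOptimalDynamicalPlan π) {a₀ a₁ : ℝ≥0∞}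
    (h₀ : a₀ • π.map (evalAt 0) ≤ m) (h₁ : a₁ • π.map (evalAt 1) ≤ m) {t : ℝ}
    (ht : t ∈ Icc (0 : ℝ) 1) :
    (ENNReal.ofReal (1 - t) * a₀ ^ (1 / N) + ENNReal.ofReal t * a₁ ^ (1 / N)) ^ N •
      π.map (evalAt t) ≤ m := by
  have hN₀ : 0 < N := by linarith
  have := hπ.isProbabilityMeasure
  refine Measure.le_iff.2 fun E hE ↦ ?_
  set A := evalAt t ⁻¹' E
  have hA : MeasurableSet A := measurable_evalAt t hE
  rw [Measure.smul_apply, smul_eq_mul, Measure.map_apply (by fun_prop) hE]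
  rcases eq_or_ne (π A) 0 with hA₀ | hA₀
  · simp [A, hA₀]
  have hcond := hπ.cond hA hA₀
  have := hcond.isProbabilityMeasure
  have := hcond.isProbabilityMeasure_map_evalAt
  have compl_null : (π[|A]).map (evalAt t) Eᶜ = 0 := by
    rw [Measure.map_apply (by fun_prop) hE.compl]
    exact ((prob_compl_eq_zero_iff hA).2 (cond_apply_self hA₀ (measure_ne_top _ _)))
  have smul_map_le {a : ℝ≥0∞} {s : ℝ} (h : a • π.map (evalAt s) ≤ m) :
      (a * π A) • (π[|A]).map (evalAt s) ≤ m := by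
    rw [← smul_smul]
    refine le_trans ?_ h
    gcongr
    rw [← Measure.map_smul]
    exact Measure.map_mono (measure_smul_cond_le π A) (by fun_prop)
  have rpow_bound : (ENNReal.ofReal (1 - t) * a₀ ^ (1 / N) + ENNReal.ofReal t * a₁ ^ (1 / N)) *
      π A ^ (1 / N) ≤ m E ^ (1 / N) :=
    calc _ = ENNReal.ofReal (1 - t) * (a₀ * π A) ^ (1 / N) +
          ENNReal.ofReal t * (a₁ * π A) ^ (1 / N) := by
          simp only [ENNReal.mul_rpow_of_nonneg _ _ (show 0 ≤ 1 / N by positivity)]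
          ring
      _ ≤ ENNReal.ofReal (1 - t) * negRenyiEntropy N m ((π[|A]).map (evalAt 0)) +
          ENNReal.ofReal t * negRenyiEntropy N m ((π[|A]).map (evalAt 1)) := by
          gcongr
          · exact rpow_le_negRenyiEntropy_of_smul_le hN _ _ (smul_map_le h₀)
          · exact rpow_le_negRenyiEntropy_of_smul_le hN _ _ (smul_map_le h₁)
      _ ≤ negRenyiEntropy N m ((π[|A]).map (evalAt t)) :=
          hsdc.negRenyiEntropy_concave hcond.isW2Geodesic ht
      _ ≤ m E ^ (1 / N) := negRenyiEntropy_le_measure_rpow hN _ _ hE compl_null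
  have rpow_rpow (b : ℝ≥0∞) : (b ^ (1 / N)) ^ N = b := by
    rw [← ENNReal.rpow_mul, one_div_mul_cancel hN₀.ne', ENNReal.rpow_one]
  simpa only [ENNReal.mul_rpow_of_nonneg _ _ hN₀.le, rpow_rpow] using
    ENNReal.rpow_le_rpow rpow_bound hN₀.le

theorem IsOptimalDynamicalPlan.smul_map_evalAt_le {X : Type*} [MetricSpace X]
    [CompleteSpace X] [SecondCountableTopology X] [MeasurableSpace X] [BorelSpace X]
    [MeasurableSpace C(unitInterval, X)] [BorelSpace C(unitInterval, X)] {N : ℝ} (hN : 1 ≤ N)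
    {m : Measure X} [SigmaFinite m] (hsdc : StronglyDisplacementConvex (renyiEntropy N m))
    {π : Measure C(unitInterval, X)} (hπ : IsOptimalDynamicalPlan π) {a : ℝ≥0∞}
    (h₀ : a • π.map (evalAt 0) ≤ m) (h₁ : a • π.map (evalAt 1) ≤ m) {t : ℝ}
    (ht : t ∈ Icc (0 : ℝ) 1) : a • π.map (evalAt t) ≤ m := by
  have sum_weights : ENNReal.ofReal (1 - t) + ENNReal.ofReal t = 1 := by
    rw [← ENNReal.ofReal_add (sub_nonneg.2 ht.2) ht.1, sub_add_cancel, ENNReal.ofReal_one]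
  have rpow_rpow : (a ^ (1 / N)) ^ N = a := by
    rw [← ENNReal.rpow_mul, one_div_mul_cancel (by positivity), ENNReal.rpow_one]
  simpa only [← add_mul, sum_weights, one_mul, rpow_rpow] using
    hπ.rpow_smul_map_evalAt_le hN hsdc h₀ h₁ ht

theorem IsOptimalDynamicalPlan.rpow_mul_smul_map_evalAt_le {X : Type*} [MetricSpace X]
    [CompleteSpace X] [SecondCountableTopology X] [MeasurableSpace X] [BorelSpace X]
    [MeasurableSpace C(unitInterval, X)] [BorelSpace C(unitInterval, X)] {N : ℝ} (hN : 1 ≤ N)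
    {m : Measure X} [SigmaFinite m] (hsdc : StronglyDisplacementConvex (renyiEntropy N m))
    {π : Measure C(unitInterval, X)} (hπ : IsOptimalDynamicalPlan π) {a : ℝ≥0∞}
    (h₀ : a • π.map (evalAt 0) ≤ m) {t : ℝ} (ht : t ∈ Icc (0 : ℝ) 1) :
    (ENNReal.ofReal (1 - t) ^ N * a) • π.map (evalAt t) ≤ m := by
  have hN₀ : 0 < N := by linarith
  have h₁ : (0 : ℝ≥0∞) • π.map (evalAt 1) ≤ m := by
    rw [zero_smul]
    exact Measure.zero_le m
  have rpow_rpow : (a ^ (1 / N)) ^ N = a := by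
    rw [← ENNReal.rpow_mul, one_div_mul_cancel hN₀.ne', ENNReal.rpow_one]
  simpa only [ENNReal.zero_rpow_of_pos (one_div_pos.2 hN₀), mul_zero, add_zero,
    ENNReal.mul_rpow_of_nonneg _ _ hN₀.le, rpow_rpow] using
    hπ.rpow_smul_map_evalAt_le hN hsdc h₀ h₁ ht

end RenyiEntropy

section SecondCountable

theorem countable_of_isSeparated_of_subset_isOpen {X : Type*} [PseudoEMetricSpace X]
    [MeasurableSpace X] [OpensMeasurableSpace X] (m : Measure X) [m.IsOpenPosMeasure] {U : Set X}
    (hU : IsOpen U) (hmU : m U ≠ ∞) {s : Set X} (hsU : s ⊆ U) {δ : ℝ≥0∞} (hδ : δ ≠ 0)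
    (hs : IsSeparated δ s) : s.Countable := by
  let A (a : s) : Set X := eball (a : X) (δ / 2) ∩ U
  have isOpen_A (a : s) : IsOpen (A a) := isOpen_eball.inter hU
  have A_disjoint : Pairwise (Function.onFun Disjoint A) := fun a b hab ↦ by
    have lt_edist : δ < edist (a : X) b := hs a.2 b.2 (Subtype.coe_ne_coe.2 hab)
    exact (eball_disjoint ((ENNReal.add_halves _).trans_le lt_edist.le)).mono
      inter_subset_left inter_subset_left
  have measure_A_pos (a : s) : 0 < m (A a) :=
    (isOpen_A a).measure_pos m ⟨a, mem_eball_self (ENNReal.half_pos hδ), hsU a.2⟩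
  have countable_pos := Measure.countable_meas_pos_of_disjoint_of_meas_iUnion_ne_top m
    (fun a ↦ (isOpen_A a).measurableSet) A_disjoint
    (measure_ne_top_of_subset (iUnion_subset fun _ ↦ inter_subset_right) hmU)
  exact countable_coe_iff.1 (countable_univ_iff.1 (countable_pos.mono fun a _ ↦ measure_A_pos a))

theorem isSeparable_of_isOpen_of_measure_ne_top {X : Type*} [PseudoEMetricSpace X]
    [MeasurableSpace X] [OpensMeasurableSpace X] (m : Measure X) [m.IsOpenPosMeasure] {U : Set X}
    (hU : IsOpen U) (hmU : m U ≠ ∞) : TopologicalSpace.IsSeparable U := by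
  have exists_countable_cover (ε : ℝ≥0∞) (hε : 0 < ε) :
      ∃ s : Set X, s.Countable ∧ U ⊆ ⋃ x ∈ s, closedEBall x ε := by
    obtain ⟨δ, hδ₀, hδε⟩ := ENNReal.lt_iff_exists_nnreal_btwn.1 hε
    obtain ⟨s, hs⟩ := zorn_subset {s : Set X | s ⊆ U ∧ IsSeparated δ s} fun c hc hchain ↦
      ⟨⋃₀ c, ⟨sUnion_subset fun s hs ↦ (hc hs).1,
        (pairwise_sUnion hchain.directedOn).2 fun s hs ↦ (hc hs).2⟩,
        fun _ ↦ subset_sUnion_of_mem⟩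
    refine ⟨s, countable_of_isSeparated_of_subset_isOpen m hU hmU hs.prop.1 hδ₀.ne' hs.prop.2, ?_⟩
    calc U ⊆ ⋃ x ∈ s, closedEBall x δ :=
          isCover_iff_subset_iUnion_closedEBall.1 (IsCover.of_maximal_isSeparated hs)
      _ ⊆ ⋃ x ∈ s, closedEBall x ε :=
          iUnion₂_mono fun _ _ ↦ closedEBall_subset_closedEBall hδε.le
  obtain ⟨t, -, ht, U_subset⟩ :=
    EMetric.subset_countable_closure_of_almost_dense_set U exists_countable_cover
  exact ⟨t, ht, U_subset⟩

theorem exists_countable_forall_ball_subset_closure {X : Type*} [PseudoMetricSpace X] {D : Set X}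
    (hD : D.Countable) : ∃ D' : Set X, D'.Countable ∧
      ∀ d ∈ D, ∀ q : ℚ, TopologicalSpace.IsSeparable (ball d (q : ℝ)) → ball d q ⊆ closure D' := by
  have exists_dense (d : X) (q : ℚ) : ∃ t : Set X, t.Countable ∧
      (TopologicalSpace.IsSeparable (ball d (q : ℝ)) → ball d q ⊆ closure t) := by
    by_cases hsep : TopologicalSpace.IsSeparable (ball d (q : ℝ))
    · obtain ⟨t, ht, hdt⟩ := hsep
      exact ⟨t, ht, fun _ ↦ hdt⟩
    · exact ⟨∅, countable_empty, fun h ↦ absurd h hsep⟩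
  choose F hF hF_dense using exists_dense
  exact ⟨⋃ d ∈ D, ⋃ q : ℚ, F d q, hD.biUnion fun d _ ↦ countable_iUnion fun q ↦ hF d q,
    fun d hd q hsep ↦ (hF_dense d q hsep).trans <| closure_mono <|
      (subset_iUnion (F d) q).trans (subset_biUnion_of_mem (u := fun d ↦ ⋃ q, F d q) hd)⟩

theorem secondCountableTopology_of_forall_isSeparable_nhds {X : Type*} [PseudoMetricSpace X]
    [PreconnectedSpace X] (h : ∀ x : X, ∃ U ∈ 𝓝 x, TopologicalSpace.IsSeparable U) :
    SecondCountableTopology X := by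
  rcases isEmpty_or_nonempty X with _ | ⟨⟨x₀⟩⟩
  · infer_instance
  choose step step_countable ball_subset using fun D : {D : Set X // D.Countable} ↦
    exists_countable_forall_ball_subset_closure D.2
  let D (n : ℕ) : {D : Set X // D.Countable} :=
    (fun D ↦ ⟨step D, step_countable D⟩)^[n] ⟨{x₀}, countable_singleton x₀⟩
  have D_succ (n : ℕ) : (D (n + 1) : Set X) = step (D n) := by
    simp only [D, Function.iterate_succ_apply']
  set S := ⋃ n, (D n : Set X)
  have isOpen_closure_S : IsOpen (closure S) := isOpen_iff.2 fun x hx ↦ by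
    obtain ⟨U, hU, hU_sep⟩ := h x
    obtain ⟨η, hη, ball_η_subset⟩ := Metric.mem_nhds_iff.1 hU
    obtain ⟨d, hd, hxd⟩ := mem_closure_iff.1 hx (η / 8) (by positivity)
    obtain ⟨n, hn⟩ := mem_iUnion.1 hd
    obtain ⟨q, hηq, hqη⟩ := exists_rat_btwn (show η / 4 < η / 2 by linarith)
    have ball_q_subset : ball d (q : ℝ) ⊆ ball x η :=
      ball_subset_ball' (by rw [dist_comm]; linarith)
    refine ⟨η / 8, by positivity, ?_⟩
    calc ball x (η / 8) ⊆ ball d q := ball_subset_ball' (by linarith)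
      _ ⊆ closure (step (D n)) :=
        ball_subset (D n) d hn q (hU_sep.mono (ball_q_subset.trans ball_η_subset))
      _ ⊆ closure S := closure_mono (D_succ n ▸ subset_iUnion (fun n ↦ (D n : Set X)) (n + 1))
  have closure_S_eq : closure S = univ := IsClopen.eq_univ ⟨isClosed_closure, isOpen_closure_S⟩
    ⟨x₀, subset_closure (mem_iUnion.2 ⟨0, rfl⟩)⟩
  have : TopologicalSpace.SeparableSpace X :=
    ⟨S, countable_iUnion fun n ↦ (D n).2, dense_iff_closure_eq.2 closure_S_eq⟩
  exact UniformSpace.secondCountable_of_separable X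

theorem IsGeodesicSpace.preconnectedSpace {X : Type*} [MetricSpace X] (hgeo : IsGeodesicSpace X) :
    PreconnectedSpace X where
  isPreconnected_univ := isPreconnected_of_forall_pair fun x _ y _ ↦ by
    obtain ⟨γ, -, rfl, rfl⟩ := exists_mem_geodesics hgeo x y
    exact ⟨range γ, subset_univ _, mem_range_self _, mem_range_self _,
      isPreconnected_range γ.continuous⟩

theorem IsGeodesicSpace.secondCountableTopology {X : Type*} [MetricSpace X] [MeasurableSpace X]
    [OpensMeasurableSpace X] (hgeo : IsGeodesicSpace X) (m : Measure X) [m.IsOpenPosMeasure]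
    [IsLocallyFiniteMeasure m] : SecondCountableTopology X := by
  have := hgeo.preconnectedSpace
  refine secondCountableTopology_of_forall_isSeparable_nhds fun x ↦ ?_
  obtain ⟨U, hxU, hU, hmU⟩ := Measure.exists_isOpen_measure_lt_top m x
  exact ⟨U, hU.mem_nhds hxU, isSeparable_of_isOpen_of_measure_ne_top m hU hmU.ne⟩

end SecondCountable

section TransportToPoint

theorem W2sq_ne_top_of_ae_mem_isBounded {X : Type*} [MetricSpace X] [MeasurableSpace X]
    {μ ν : Measure X} [IsProbabilityMeasure μ] [IsProbabilityMeasure ν] {B : Set X}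
    (hB : Bornology.IsBounded B) (hμ : ∀ᵐ y ∂μ, y ∈ B) (hν : ∀ᵐ y ∂ν, y ∈ B) :
    W2sq μ ν ≠ ∞ := by
  refine ne_top_of_le_ne_top ?_ (W2sq_le_lintegral_of_mem_couplings (prod_mem_couplings μ ν))
  refine ne_top_of_le_ne_top (ENNReal.pow_ne_top (n := 2) hB.ediam_ne_top) ?_
  calc ∫⁻ p, edist p.1 p.2 ^ 2 ∂(μ.prod ν) ≤ ∫⁻ _, ediam B ^ 2 ∂(μ.prod ν) := by
        refine lintegral_mono_ae ?_
        filter_upwards [Measure.quasiMeasurePreserving_fst.ae hμ,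
          Measure.quasiMeasurePreserving_snd.ae hν] with p hp₁ hp₂
        gcongr
        exact edist_le_ediam_of_mem hp₁ hp₂
    _ = ediam B ^ 2 := by simp

variable {X : Type*} [MetricSpace X] [CompleteSpace X] [SecondCountableTopology X]
  [MeasurableSpace X] [BorelSpace X] [MeasurableSpace C(unitInterval, X)]
  [BorelSpace C(unitInterval, X)]

theorem exists_isOptimalDynamicalPlan_dirac (hgeo : IsGeodesicSpace X) (μ : Measure X)
    [IsProbabilityMeasure μ] {B : Set X} (hB : Bornology.IsBounded B) (hμ : ∀ᵐ y ∂μ, y ∈ B)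
    (x : X) :
    ∃ π : Measure C(unitInterval, X), IsOptimalDynamicalPlan π ∧ π.map (evalAt 0) = μ ∧
      ∀ᵐ γ ∂π, ∀ t ∈ Icc (0 : ℝ) 1, dist (evalAt t γ) x = (1 - t) * dist (evalAt 0 γ) x := by
  obtain ⟨π, hπ, map_zero, map_one⟩ := exists_isOptimalDynamicalPlan hgeo μ (.dirac x)
    (W2sq_ne_top_of_ae_mem_isBounded (hB.insert x) (hμ.mono fun y ↦ mem_insert_of_mem x)
      ((ae_dirac_eq x).symm ▸ mem_insert x B))
  have ae_evalAt_one : ∀ᵐ γ ∂π, evalAt 1 γ = x := by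
    refine ae_of_ae_map (p := (· = x)) (measurable_evalAt 1).aemeasurable ?_
    rw [map_one, ae_dirac_eq]
    exact rfl
  refine ⟨π, hπ, map_zero, ?_⟩
  filter_upwards [hπ.ae_mem_geodesics, ae_evalAt_one] with γ hγ hγ₁ t ht
  rw [← hγ₁, dist_evalAt hγ ht (right_mem_Icc.2 zero_le_one), abs_sub_comm,
    abs_of_nonneg (sub_nonneg.2 ht.2)]

theorem ofReal_rpow_mul_measure_le_measure_ball (hgeo : IsGeodesicSpace X) {N : ℝ} (hN : 1 ≤ N)
    {m : Measure X} [SigmaFinite m] (hsdc : StronglyDisplacementConvex (renyiEntropy N m)) {x : X}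
    {R a : ℝ} (ha₀ : 0 < a) (ha₁ : a ≤ 1) {A : Set X} (hA : MeasurableSet A)
    (hAR : A ⊆ ball x R) (hmA : m A ≠ ∞) :
    ENNReal.ofReal a ^ N * m A ≤ m (ball x (a * R)) := by
  rcases eq_or_ne (m A) 0 with hA₀ | hA₀
  · simp [hA₀]
  have := cond_isProbabilityMeasure_of_finite hA₀ hmA
  obtain ⟨π, hπ, map_zero, ae_dist⟩ := exists_isOptimalDynamicalPlan_dirac hgeo m[|A]
    isBounded_ball ((ae_cond_mem hA).mono fun y hy ↦ hAR hy) x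
  have ht : 1 - a ∈ Icc (0 : ℝ) 1 := ⟨by linarith, by linarith⟩
  have ae_start : ∀ᵐ γ ∂π, evalAt 0 γ ∈ A :=
    ae_of_ae_map (measurable_evalAt 0).aemeasurable (map_zero ▸ ae_cond_mem hA)
  have map_ball_eq_one : π.map (evalAt (1 - a)) (ball x (a * R)) = 1 := by
    have := hπ.isProbabilityMeasure_map_evalAt (1 - a)
    refine (mem_ae_iff_prob_eq_one measurableSet_ball).1
      ((ae_map_iff (by fun_prop) measurableSet_ball).2 ?_)
    filter_upwards [ae_start, ae_dist] with γ hγA hγ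
    rw [hγ _ ht, sub_sub_cancel]
    exact mul_lt_mul_of_pos_left (mem_ball.1 (hAR hγA)) ha₀
  have density_le := hπ.rpow_mul_smul_map_evalAt_le hN hsdc
    (a := m A) (map_zero ▸ measure_smul_cond_le m A) ht
  simpa [map_ball_eq_one] using density_le (ball x (a * R))

theorem ofReal_rpow_mul_measure_ball_le (hgeo : IsGeodesicSpace X) {N : ℝ} (hN : 1 ≤ N)
    {m : Measure X} [SigmaFinite m] (hsdc : StronglyDisplacementConvex (renyiEntropy N m)) (x : X)
    (R : ℝ) {a : ℝ} (ha₀ : 0 < a) (ha₁ : a ≤ 1) :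
    ENNReal.ofReal a ^ N * m (ball x R) ≤ m (ball x (a * R)) := by
  have rpow_ne_zero : ENNReal.ofReal a ^ N ≠ 0 := by positivity
  have rpow_ne_top : ENNReal.ofReal a ^ N ≠ ∞ := by finiteness
  rw [ENNReal.mul_le_iff_le_inv rpow_ne_zero rpow_ne_top]
  refine le_of_forall_lt fun c hc ↦ ?_
  obtain ⟨A, hA, hAR, hcA, hmA⟩ := Measure.exists_subset_measure_lt_top measurableSet_ball hc
  exact hcA.trans_le ((ENNReal.mul_le_iff_le_inv rpow_ne_zero rpow_ne_top).1
    (ofReal_rpow_mul_measure_le_measure_ball hgeo hN hsdc ha₀ ha₁ hA hAR hmA.ne))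

theorem StronglyDisplacementConvex.measure_ball_ne_top (hgeo : IsGeodesicSpace X) {N : ℝ}
    (hN : 1 ≤ N) {m : Measure X} [IsLocallyFiniteMeasure m]
    (hsdc : StronglyDisplacementConvex (renyiEntropy N m)) (x : X) (R : ℝ) :
    m (ball x R) ≠ ∞ := by
  obtain ⟨U, hU, hmU⟩ := m.finiteAt_nhds x
  obtain ⟨ρ, hρ, ball_subset⟩ := Metric.mem_nhds_iff.1 hU
  obtain ⟨a, ha, haR⟩ : ∃ a ∈ Ioc (0 : ℝ) 1, a * R ≤ ρ := by
    refine ⟨ρ / (ρ + |R|), ⟨by positivity, div_le_one_of_le₀ (by simp) (by positivity)⟩, ?_⟩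
    rw [div_mul_eq_mul_div, div_le_iff₀ (by positivity)]
    gcongr
    linarith [le_abs_self R]
  have mul_lt_top : ENNReal.ofReal a ^ N * m (ball x R) < ∞ :=
    calc ENNReal.ofReal a ^ N * m (ball x R) ≤ m (ball x (a * R)) :=
          ofReal_rpow_mul_measure_ball_le hgeo hN hsdc x R ha.1 ha.2
      _ ≤ m U := measure_mono ((ball_subset_ball haR).trans ball_subset)
      _ < ∞ := hmU
  have rpow_ne_zero : ENNReal.ofReal a ^ N ≠ 0 := by have := ha.1; positivity
  exact (ENNReal.lt_top_of_mul_ne_top_right mul_lt_top.ne rpow_ne_zero).ne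

end TransportToPoint

section UpperGradient

variable {X : Type*} [MetricSpace X]

theorem evalAt_mem_ball_of_mem_ball_half {γ : C(unitInterval, X)} (hγ : γ ∈ geodesics X) {x : X}
    {r : ℝ} (h₀ : evalAt 0 γ ∈ ball x (r / 2)) (h₁ : evalAt 1 γ ∈ ball x (r / 2)) {t : ℝ}
    (ht : t ∈ Icc (0 : ℝ) 1) : evalAt t γ ∈ ball x r := by
  rw [mem_ball] at *
  have endpoints_lt : dist (evalAt 0 γ) (evalAt 1 γ) < r := by
    linarith [dist_triangle_right (evalAt 0 γ) (evalAt 1 γ) x]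
  rcases le_total t (1 / 2) with ht' | ht'
  · have dist_zero := dist_evalAt hγ ht (left_mem_Icc.2 zero_le_one)
    rw [sub_zero, abs_of_nonneg ht.1] at dist_zero
    nlinarith [dist_triangle (evalAt t γ) (evalAt 0 γ) x, ht.1,
      dist_nonneg (x := evalAt 0 γ) (y := evalAt 1 γ)]
  · have dist_one := dist_evalAt hγ ht (right_mem_Icc.2 zero_le_one)
    rw [abs_sub_comm, abs_of_nonneg (sub_nonneg.2 ht.2)] at dist_one
    nlinarith [dist_triangle (evalAt t γ) (evalAt 1 γ) x, ht.2,
      dist_nonneg (x := evalAt 0 γ) (y := evalAt 1 γ)]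

theorem IsUpperGradient.abs_evalAt_sub_le [MeasurableSpace X] {u : X → ℝ} {g : X → ℝ≥0∞}
    (hg : IsUpperGradient u g) {γ : C(unitInterval, X)} (hγ : γ ∈ geodesics X) {a : ℝ}
    (ha : a ∈ Icc (0 : ℝ) 1) {L : ℝ≥0} (hL : dist (evalAt 0 γ) (evalAt a γ) ≤ L) :
    ENNReal.ofReal |u (evalAt a γ) - u (evalAt 0 γ)| ≤
      L * ∫⁻ t in Icc (0 : ℝ) 1, g (evalAt (a * t) γ) := by
  suffices lipschitz : LipschitzOnWith L (fun t ↦ evalAt (a * t) γ) (Icc 0 1) by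
    simpa using hg.2 _ L lipschitz
  refine LipschitzOnWith.of_dist_le_mul fun s hs t ht ↦ ?_
  calc dist (evalAt (a * s) γ) (evalAt (a * t) γ)
      = dist (evalAt 0 γ) (evalAt a γ) * dist s t := by
        rw [dist_evalAt hγ (unitInterval.mul_mem ha hs) (unitInterval.mul_mem ha ht),
          dist_evalAt hγ (left_mem_Icc.2 zero_le_one) ha, ← mul_sub, abs_mul, zero_sub, abs_neg,
          Real.dist_eq]
        ring
    _ ≤ L * dist s t := by gcongr

variable [MeasurableSpace X] [BorelSpace X] [MeasurableSpace C(unitInterval, X)]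
  [BorelSpace C(unitInterval, X)]

theorem measurable_evalAt_mul (a : ℝ) :
    Measurable fun p : C(unitInterval, X) × ℝ ↦ evalAt (a * p.2) p.1 :=
  (continuous_fst.eval (continuous_projIcc.comp (by fun_prop))).measurable

theorem IsUpperGradient.mul_lintegral_abs_evalAt_sub_le {u : X → ℝ} {g : X → ℝ≥0∞}
    (hg : IsUpperGradient u g) {π : Measure C(unitInterval, X)} [SFinite π]
    (hπ : ∀ᵐ γ ∂π, γ ∈ geodesics X) {a : ℝ} (ha : a ∈ Icc (0 : ℝ) 1) {L : ℝ≥0}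
    (hL : ∀ᵐ γ ∂π, dist (evalAt 0 γ) (evalAt a γ) ≤ L) {c : ℝ≥0∞} {ν : Measure X}
    (hν : ∀ t ∈ Icc 0 a, c • π.map (evalAt t) ≤ ν) :
    c * ∫⁻ γ, ENNReal.ofReal |u (evalAt a γ) - u (evalAt 0 γ)| ∂π ≤ L * ∫⁻ y, g y ∂ν := by
  have joint_meas : Measurable fun p : C(unitInterval, X) × ℝ ↦ g (evalAt (a * p.2) p.1) :=
    hg.1.comp (measurable_evalAt_mul a)
  calc c * ∫⁻ γ, ENNReal.ofReal |u (evalAt a γ) - u (evalAt 0 γ)| ∂π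
      ≤ c * ∫⁻ γ, (L * ∫⁻ t in Icc (0 : ℝ) 1, g (evalAt (a * t) γ)) ∂π := by
        gcongr c * ?_
        refine lintegral_mono_ae ?_
        filter_upwards [hπ, hL] with γ hγ hγL using hg.abs_evalAt_sub_le hγ ha hγL
    _ = L * (c * ∫⁻ t in Icc (0 : ℝ) 1, ∫⁻ γ, g (evalAt (a * t) γ) ∂π) := by
        rw [lintegral_const_mul _ joint_meas.lintegral_prod_right', mul_left_comm,
          lintegral_lintegral_swap joint_meas.aemeasurable]
    _ = L * ∫⁻ t in Icc (0 : ℝ) 1, ∫⁻ y, g y ∂(c • π.map (evalAt (a * t))) := by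
        simp only [lintegral_smul_measure, lintegral_map hg.1 (measurable_evalAt _), smul_eq_mul]
        rw [lintegral_const_mul _ joint_meas.lintegral_prod_left']
    _ ≤ L * ∫⁻ _ in Icc (0 : ℝ) 1, ∫⁻ y, g y ∂ν := by
        gcongr L * ?_
        refine setLIntegral_mono' measurableSet_Icc fun t ht ↦ lintegral_mono' ?_ le_rfl
        exact hν _ ⟨mul_nonneg ha.1 ht.1, mul_le_of_le_one_right ha.1 ht.2⟩
    _ = L * ∫⁻ y, g y ∂ν := by simp

end UpperGradient

section Median

theorem exists_measure_Iio_le_le_measure_Iic (ν : Measure ℝ) [IsProbabilityMeasure ν] {p : ℝ}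
    (hp₀ : 0 < p) (hp₁ : p < 1) :
    ∃ M, ν (Iio M) ≤ ENNReal.ofReal p ∧ ENNReal.ofReal p ≤ ν (Iic M) := by
  set S : Set ℝ := {c | p ≤ cdf ν c}
  have nonempty_S : S.Nonempty :=
    ((tendsto_cdf_atTop ν).eventually_const_le hp₁).exists
  have bddBelow_S : BddBelow S := by
    obtain ⟨c, hc⟩ := ((tendsto_cdf_atBot ν).eventually_lt_const hp₀).exists
    exact ⟨c, fun d hd ↦ (monotone_cdf ν).reflect_lt (hc.trans_le hd) |>.le⟩
  refine ⟨sInf S, ?_, ?_⟩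
  · rw [← measure_cdf ν, StieltjesFunction.measure_Iio _ (tendsto_cdf_atBot ν), sub_zero]
    refine ENNReal.ofReal_le_ofReal
      (le_of_tendsto ((monotone_cdf ν).tendsto_leftLim _) (eventually_nhdsWithin_of_forall ?_))
    exact fun c hc ↦ (not_le.1 (notMem_of_lt_csInf (s := S) hc bddBelow_S)).le
  · rw [← ofReal_cdf]
    refine ENNReal.ofReal_le_ofReal
      (ge_of_tendsto (((cdf ν).right_continuous _).mono Ioi_subset_Ici_self)
        (eventually_nhdsWithin_of_forall fun c hc ↦ ?_))
    obtain ⟨d, hd, hdc⟩ := exists_lt_of_csInf_lt nonempty_S hc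
    exact le_trans hd (monotone_cdf ν hdc.le)

variable {Ω : Type*} [MeasurableSpace Ω]

theorem exists_restrict_le_le_restrict (μ : Measure Ω) {s t : Set Ω} (hs : MeasurableSet s)
    (ht : MeasurableSet t) (hst : s ⊆ t) (hμt : μ t ≠ ∞) {c : ℝ≥0∞} (hsc : μ s ≤ c)
    (hct : c ≤ μ t) : ∃ ν : Measure Ω, μ.restrict s ≤ ν ∧ ν ≤ μ.restrict t ∧ ν univ = c := by
  have measure_diff_ne_top : μ (t \ s) ≠ ∞ := measure_ne_top_of_subset sdiff_subset hμt
  have sub_le : c - μ s ≤ μ (t \ s) :=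
    (tsub_le_tsub_right hct _).trans le_measure_sdiff
  set b := (c - μ s) / μ (t \ s)
  have mul_eq : b * μ (t \ s) = c - μ s :=
    ENNReal.div_mul_cancel' (fun h ↦ le_zero_iff.1 (sub_le.trans_eq h))
      fun h ↦ absurd h measure_diff_ne_top
  have b_le_one : b ≤ 1 := ENNReal.div_le_of_le_mul (by rwa [one_mul])
  refine ⟨μ.restrict s + b • μ.restrict (t \ s), Measure.le_add_right le_rfl, ?_, ?_⟩
  · calc μ.restrict s + b • μ.restrict (t \ s)
        ≤ μ.restrict s + (1 : ℝ≥0∞) • μ.restrict (t \ s) := by gcongr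
      _ = μ.restrict t := by
          rw [one_smul, ← Measure.restrict_union disjoint_sdiff_right (ht.diff hs),
            union_sdiff_cancel hst]
  · simp [mul_eq, add_tsub_cancel_of_le hsc]

theorem exists_median_splitting (μ : Measure Ω) [IsProbabilityMeasure μ] {u : Ω → ℝ}
    (hu : Measurable u) :
    ∃ (M : ℝ) (ν₀ ν₁ : Measure Ω), IsProbabilityMeasure ν₀ ∧ IsProbabilityMeasure ν₁ ∧
      ν₀ + ν₁ = (2 : ℝ≥0∞) • μ ∧ (∀ᵐ y ∂ν₀, M ≤ u y) ∧ ∀ᵐ y ∂ν₁, u y ≤ M := by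
  have := Measure.isProbabilityMeasure_map (μ := μ) hu.aemeasurable
  obtain ⟨M, measure_lt_le, le_measure_le⟩ :=
    exists_measure_Iio_le_le_measure_Iic (μ.map u) (p := 2⁻¹) (by norm_num) (by norm_num)
  have ofReal_half : ENNReal.ofReal 2⁻¹ = 2⁻¹ := by rw [ENNReal.ofReal_inv_of_pos two_pos]; simp
  rw [Measure.map_apply hu measurableSet_Iio, ofReal_half] at measure_lt_le
  rw [Measure.map_apply hu measurableSet_Iic, ofReal_half] at le_measure_le
  have two_mul_half : (2 : ℝ≥0∞) * 2⁻¹ = 1 :=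
    ENNReal.mul_inv_cancel two_ne_zero ENNReal.ofNat_ne_top
  have : IsFiniteMeasure ((2 : ℝ≥0∞) • μ) := μ.smul_finite ENNReal.ofNat_ne_top
  obtain ⟨ν₁, lt_le_ν₁, ν₁_le, ν₁_univ⟩ := exists_restrict_le_le_restrict ((2 : ℝ≥0∞) • μ)
    (hu measurableSet_Iio) (hu measurableSet_Iic) (preimage_mono (Iio_subset_Iic_self (a := M)))
    (measure_ne_top _ _) (c := 1)
    (by rw [← two_mul_half, Measure.smul_apply, smul_eq_mul]; gcongr)
    (by rw [← two_mul_half, Measure.smul_apply, smul_eq_mul]; gcongr)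
  have prob_ν₁ : IsProbabilityMeasure ν₁ := ⟨ν₁_univ⟩
  have ν₁_le_two : ν₁ ≤ (2 : ℝ≥0∞) • μ := ν₁_le.trans Measure.restrict_le_self
  refine ⟨M, (2 : ℝ≥0∞) • μ - ν₁, ν₁, ⟨?_⟩, prob_ν₁, Measure.sub_add_cancel_of_le ν₁_le_two,
    ?_, ae_mono ν₁_le (ae_restrict_mem (hu measurableSet_Iic))⟩
  · rw [Measure.sub_apply .univ ν₁_le_two]
    simp [← one_add_one_eq_two]
  · have lt_eq_compl : {y | M ≤ u y}ᶜ = u ⁻¹' Iio M := by ext; simp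
    rw [ae_iff, ← compl_ofPred, lt_eq_compl, Measure.sub_apply (hu measurableSet_Iio) ν₁_le_two,
      tsub_eq_zero_iff_le]
    exact (Measure.restrict_apply_self _ _).symm.trans_le (lt_le_ν₁ _)

end Median

section Poincare

theorem le_restrict_of_ae_mem {Ω : Type*} [MeasurableSpace Ω] {μ ν : Measure Ω} (h : μ ≤ ν)
    {s : Set Ω} (hs : ∀ᵐ y ∂μ, y ∈ s) : μ ≤ ν.restrict s :=
  (Measure.restrict_eq_self_of_ae_mem hs).symm.trans_le (Measure.restrict_mono le_rfl h)

theorem ofReal_abs_sub_add_ofReal_abs_sub {a b M : ℝ} (ha : M ≤ a) (hb : b ≤ M) :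
    ENNReal.ofReal |a - M| + ENNReal.ofReal |b - M| = ENNReal.ofReal |b - a| := by
  rw [← ENNReal.ofReal_add (abs_nonneg _) (abs_nonneg _), abs_of_nonneg (sub_nonneg.2 ha),
    abs_of_nonpos (sub_nonpos.2 hb), abs_of_nonpos (sub_nonpos.2 (hb.trans ha))]
  ring_nf

theorem lintegral_enorm_sub_integral_le {Ω E : Type*} [MeasurableSpace Ω] {μ : Measure Ω}
    [IsProbabilityMeasure μ] [NormedAddCommGroup E] [NormedSpace ℝ E] [CompleteSpace E] {f : Ω → E}
    (hf : AEStronglyMeasurable f μ) (c : E) :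
    ∫⁻ y, ‖f y - ∫ z, f z ∂μ‖ₑ ∂μ ≤ 2 * ∫⁻ y, ‖f y - c‖ₑ ∂μ := by
  rcases eq_or_ne (∫⁻ y, ‖f y - c‖ₑ ∂μ) ∞ with htop | hfin
  · simp [htop]
  have integrable_sub : Integrable (fun y ↦ f y - c) μ :=
    ⟨hf.sub aestronglyMeasurable_const, hfin.lt_top⟩
  have integrable_f : Integrable f μ :=
    (integrable_sub.add (integrable_const c)).congr (.of_forall fun y ↦ sub_add_cancel (f y) c)
  have enorm_sub_le : ‖c - ∫ z, f z ∂μ‖ₑ ≤ ∫⁻ y, ‖f y - c‖ₑ ∂μ := by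
    have integral_sub_eq : ∫ y, (f y - c) ∂μ = ∫ z, f z ∂μ - c := by
      rw [integral_sub integrable_f (integrable_const c)]; simp
    rw [← enorm_neg, neg_sub, ← integral_sub_eq]
    exact enorm_integral_le_lintegral_enorm _
  calc ∫⁻ y, ‖f y - ∫ z, f z ∂μ‖ₑ ∂μ
      ≤ ∫⁻ y, (‖f y - c‖ₑ + ‖c - ∫ z, f z ∂μ‖ₑ) ∂μ := by
        refine lintegral_mono fun y ↦ ?_
        rw [← sub_add_sub_cancel (f y) c]
        exact enorm_add_le _ _
    _ = ∫⁻ y, ‖f y - c‖ₑ ∂μ + ‖c - ∫ z, f z ∂μ‖ₑ := by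
        rw [lintegral_add_right _ measurable_const]; simp
    _ ≤ 2 * ∫⁻ y, ‖f y - c‖ₑ ∂μ := by rw [two_mul]; gcongr

variable {X : Type*} [MetricSpace X] [CompleteSpace X] [SecondCountableTopology X]
  [MeasurableSpace X] [BorelSpace X] [MeasurableSpace C(unitInterval, X)]
  [BorelSpace C(unitInterval, X)] {N : ℝ} {m : Measure X} {u : X → ℝ} {g : X → ℝ≥0∞}

theorem exists_plan_mul_lintegral_abs_sub_le [SigmaFinite m] (hgeo : IsGeodesicSpace X)
    (hN : 1 ≤ N) (hsdc : StronglyDisplacementConvex (renyiEntropy N m))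
    (hg : IsUpperGradient u g) {x : X} {r : ℝ} {ν₀ ν₁ : Measure X} [IsProbabilityMeasure ν₀]
    [IsProbabilityMeasure ν₁] (hν₀ : ∀ᵐ y ∂ν₀, y ∈ ball x (r / 2))
    (hν₁ : ∀ᵐ y ∂ν₁, y ∈ ball x (r / 2)) {a : ℝ≥0∞} (h₀ : a • ν₀ ≤ m) (h₁ : a • ν₁ ≤ m) :
    ∃ π : Measure C(unitInterval, X), π.map (evalAt 0) = ν₀ ∧ π.map (evalAt 1) = ν₁ ∧
      a * ∫⁻ γ, ENNReal.ofReal |u (evalAt 1 γ) - u (evalAt 0 γ)| ∂π ≤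
        ENNReal.ofReal r * ∫⁻ y in ball x r, g y ∂m := by
  obtain ⟨π, hπ, rfl, rfl⟩ := exists_isOptimalDynamicalPlan hgeo ν₀ ν₁
    (W2sq_ne_top_of_ae_mem_isBounded isBounded_ball hν₀ hν₁)
  have := hπ.isProbabilityMeasure
  have ae_start := ae_of_ae_map (measurable_evalAt 0).aemeasurable hν₀
  have ae_end := ae_of_ae_map (measurable_evalAt 1).aemeasurable hν₁
  refine ⟨π, rfl, rfl, hg.mul_lintegral_abs_evalAt_sub_le (L := r.toNNReal) hπ.ae_mem_geodesics
    (right_mem_Icc.2 zero_le_one) ?_ fun t ht ↦ ?_⟩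
  · filter_upwards [ae_start, ae_end] with γ hγ₀ hγ₁
    refine le_trans ?_ (Real.le_coe_toNNReal r)
    linarith [dist_triangle_right (evalAt 0 γ) (evalAt 1 γ) x, mem_ball.1 hγ₀, mem_ball.1 hγ₁]
  · refine le_restrict_of_ae_mem (hπ.smul_map_evalAt_le hN hsdc h₀ h₁ ht)
      (Measure.ae_smul_measure ((ae_map_iff (by fun_prop) measurableSet_ball).2 ?_) a)
    filter_upwards [hπ.ae_mem_geodesics, ae_start, ae_end] with γ hγ hγ₀ hγ₁
    exact evalAt_mem_ball_of_mem_ball_half hγ hγ₀ hγ₁ ht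

theorem exists_mul_lintegral_abs_sub_le [SigmaFinite m] (hgeo : IsGeodesicSpace X) (hN : 1 ≤ N)
    (hsdc : StronglyDisplacementConvex (renyiEntropy N m)) (hu : Measurable u)
    (hg : IsUpperGradient u g) {x : X} {r : ℝ} {μ : Measure X} [IsProbabilityMeasure μ]
    (hμ : ∀ᵐ y ∂μ, y ∈ ball x (r / 2)) {a : ℝ≥0∞} (ha : a • μ ≤ m) :
    ∃ M : ℝ, a * ∫⁻ y, ENNReal.ofReal |u y - M| ∂μ ≤
      ENNReal.ofReal r * ∫⁻ y in ball x r, g y ∂m := by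
  obtain ⟨M, ν₀, ν₁, _, _, hν, le_u, u_le⟩ := exists_median_splitting μ hu
  have half_mul_two : a / 2 * 2 = a := ENNReal.div_mul_cancel two_ne_zero ENNReal.ofNat_ne_top
  have ae_ball : ∀ᵐ y ∂(ν₀ + ν₁), y ∈ ball x (r / 2) := hν ▸ Measure.ae_smul_measure hμ 2
  have smul_add_le : (a / 2) • (ν₀ + ν₁) ≤ m := by rwa [hν, smul_smul, half_mul_two]
  obtain ⟨π, rfl, rfl, transport_le⟩ := exists_plan_mul_lintegral_abs_sub_le hgeo hN hsdc hg
    (ae_mono (Measure.le_add_right le_rfl) ae_ball) (ae_mono (Measure.le_add_left le_rfl) ae_ball)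
    (a := a / 2) (le_trans (by gcongr; exact Measure.le_add_right le_rfl) smul_add_le)
    (le_trans (by gcongr; exact Measure.le_add_left le_rfl) smul_add_le)
  have measurable_abs : Measurable fun y ↦ ENNReal.ofReal |u y - M| := by fun_prop
  refine ⟨M, le_of_eq_of_le ?_ transport_le⟩
  calc a * ∫⁻ y, ENNReal.ofReal |u y - M| ∂μ
      = a / 2 * ∫⁻ y, ENNReal.ofReal |u y - M| ∂(π.map (evalAt 0) + π.map (evalAt 1)) := by
        rw [hν, lintegral_smul_measure, smul_eq_mul, ← mul_assoc, half_mul_two]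
    _ = a / 2 * ∫⁻ γ, (ENNReal.ofReal |u (evalAt 0 γ) - M| +
          ENNReal.ofReal |u (evalAt 1 γ) - M|) ∂π := by
        rw [lintegral_add_measure, lintegral_map measurable_abs (by fun_prop),
          lintegral_map measurable_abs (by fun_prop), lintegral_add_left (by fun_prop)]
    _ = a / 2 * ∫⁻ γ, ENNReal.ofReal |u (evalAt 1 γ) - u (evalAt 0 γ)| ∂π := by
        congr 1
        refine lintegral_congr_ae ?_
        filter_upwards [ae_of_ae_map (by fun_prop) le_u, ae_of_ae_map (by fun_prop) u_le]
          with γ hγ₀ hγ₁ using ofReal_abs_sub_add_ofReal_abs_sub hγ₀ hγ₁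

theorem exists_plan_cond_ball_half [SigmaFinite m] (hgeo : IsGeodesicSpace X) (hN : 1 ≤ N)
    (hsdc : StronglyDisplacementConvex (renyiEntropy N m)) (hg : IsUpperGradient u g) {x : X}
    {r : ℝ} (hr : 0 < r) [IsProbabilityMeasure m[|ball x r]] :
    ∃ π : Measure C(unitInterval, X), IsProbabilityMeasure π ∧
      π.map (evalAt 0) = m[|ball x r] ∧ (∀ᵐ γ ∂π, evalAt (1 / 2) γ ∈ ball x (r / 2)) ∧
      (ENNReal.ofReal (1 / 2) ^ N * m (ball x r)) • π.map (evalAt (1 / 2)) ≤ m ∧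
      ENNReal.ofReal (1 / 2) ^ N * m (ball x r) *
          ∫⁻ γ, ENNReal.ofReal |u (evalAt (1 / 2) γ) - u (evalAt 0 γ)| ∂π ≤
        ENNReal.ofReal (r / 2) * ∫⁻ y in ball x r, g y ∂m := by
  obtain ⟨π, hπ, map_zero, ae_dist⟩ := exists_isOptimalDynamicalPlan_dirac hgeo m[|ball x r]
    isBounded_ball (ae_cond_mem measurableSet_ball) x
  have := hπ.isProbabilityMeasure
  have half_mem : (1 / 2 : ℝ) ∈ Icc (0 : ℝ) 1 := by norm_num
  have ae_start : ∀ᵐ γ ∂π, dist (evalAt 0 γ) x < r :=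
    ae_of_ae_map (measurable_evalAt 0).aemeasurable (map_zero ▸ ae_cond_mem measurableSet_ball)
  have smul_map_le {t : ℝ} (ht : t ∈ Icc (0 : ℝ) (1 / 2)) :
      (ENNReal.ofReal (1 / 2) ^ N * m (ball x r)) • π.map (evalAt t) ≤ m := by
    refine le_trans ?_ (hπ.rpow_mul_smul_map_evalAt_le hN hsdc (a := m (ball x r))
      (map_zero ▸ measure_smul_cond_le m _) (t := t) ⟨ht.1, ht.2.trans half_mem.2⟩)
    gcongr
    linarith [ht.2]
  refine ⟨π, this, map_zero, ?_, smul_map_le (right_mem_Icc.2 half_mem.1), ?_⟩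
  · filter_upwards [ae_start, ae_dist] with γ hγr hγ
    rw [mem_ball, hγ _ half_mem]
    linarith
  refine hg.mul_lintegral_abs_evalAt_sub_le (L := (r / 2).toNNReal) hπ.ae_mem_geodesics half_mem
    ?_ fun t ht ↦ ?_
  · filter_upwards [hπ.ae_mem_geodesics, ae_start, ae_dist] with γ hγ hγr hγx
    have end_eq : evalAt 1 γ = x := by simpa using hγx 1 (right_mem_Icc.2 zero_le_one)
    rw [dist_evalAt hγ (left_mem_Icc.2 zero_le_one) half_mem, end_eq, zero_sub, abs_neg,
      abs_of_pos one_half_pos, Real.coe_toNNReal _ (by positivity)]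
    linarith
  · refine le_restrict_of_ae_mem (smul_map_le ht)
      (Measure.ae_smul_measure ((ae_map_iff (by fun_prop) measurableSet_ball).2 ?_) _)
    filter_upwards [ae_start, ae_dist] with γ hγr hγ
    rw [hγ _ ⟨ht.1, ht.2.trans half_mem.2⟩]
    nlinarith [ht.1, dist_nonneg (x := evalAt 0 γ) (y := x)]

theorem exists_mul_lintegral_abs_sub_cond_ball_le [SigmaFinite m] (hgeo : IsGeodesicSpace X)
    (hN : 1 ≤ N) (hsdc : StronglyDisplacementConvex (renyiEntropy N m)) (hu : Measurable u)
    (hg : IsUpperGradient u g) {x : X} {r : ℝ} (hr : 0 < r) [IsProbabilityMeasure m[|ball x r]] :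
    ∃ M : ℝ, ENNReal.ofReal (1 / 2) ^ N * m (ball x r) *
        ∫⁻ y, ENNReal.ofReal |u y - M| ∂m[|ball x r] ≤
      ENNReal.ofReal (3 / 2 * r) * ∫⁻ y in ball x r, g y ∂m := by
  obtain ⟨π, _, map_zero, ae_half, smul_map_le, transport_le⟩ :=
    exists_plan_cond_ball_half hgeo hN hsdc hg (x := x) hr
  have : IsProbabilityMeasure (π.map (evalAt (1 / 2))) :=
    Measure.isProbabilityMeasure_map (by fun_prop)
  obtain ⟨M, half_le⟩ := exists_mul_lintegral_abs_sub_le hgeo hN hsdc hu hg (x := x) (r := r)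
    ((ae_map_iff (by fun_prop) measurableSet_ball).2 ae_half) smul_map_le
  have measurable_abs : Measurable fun y ↦ ENNReal.ofReal |u y - M| := by fun_prop
  rw [lintegral_map measurable_abs (by fun_prop)] at half_le
  refine ⟨M, ?_⟩
  rw [← map_zero, lintegral_map measurable_abs (by fun_prop)]
  set a := ENNReal.ofReal (1 / 2) ^ N * m (ball x r)
  set G := ∫⁻ y in ball x r, g y ∂m
  calc a * ∫⁻ γ, ENNReal.ofReal |u (evalAt 0 γ) - M| ∂π
      ≤ a * ∫⁻ γ, (ENNReal.ofReal |u (evalAt (1 / 2) γ) - M| +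
          ENNReal.ofReal |u (evalAt (1 / 2) γ) - u (evalAt 0 γ)|) ∂π := by
        gcongr with γ
        rw [← ENNReal.ofReal_add (abs_nonneg _) (abs_nonneg _), add_comm,
          abs_sub_comm (u (evalAt (1 / 2) γ)) (u (evalAt 0 γ))]
        exact ENNReal.ofReal_le_ofReal (abs_sub_le _ _ _)
    _ ≤ ENNReal.ofReal r * G + ENNReal.ofReal (r / 2) * G := by
        rw [lintegral_add_left (by fun_prop), mul_add]
        exact add_le_add half_le transport_le
    _ = ENNReal.ofReal (3 / 2 * r) * G := by
        rw [← add_mul, ← ENNReal.ofReal_add (by positivity) (by positivity)]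
        ring_nf

theorem exists_lintegral_abs_sub_cond_ball_le [SigmaFinite m] (hgeo : IsGeodesicSpace X)
    (hN : 1 ≤ N) (hsdc : StronglyDisplacementConvex (renyiEntropy N m)) (hu : Measurable u)
    (hg : IsUpperGradient u g) {x : X} {r : ℝ} (hr : 0 < r) (hm₀ : m (ball x r) ≠ 0)
    (hm : m (ball x r) ≠ ∞) :
    ∃ M : ℝ, ∫⁻ y, ENNReal.ofReal |u y - M| ∂m[|ball x r] ≤
      ENNReal.ofReal (3 / 2 * 2 ^ N * r) * ∫⁻ y, g y ∂m[|ball x r] := by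
  have := cond_isProbabilityMeasure_of_finite hm₀ hm
  obtain ⟨M, hM⟩ := exists_mul_lintegral_abs_sub_cond_ball_le hgeo hN hsdc hu hg (x := x) hr
  set a := ENNReal.ofReal (1 / 2) ^ N * m (ball x r)
  have a_ne_zero : a ≠ 0 := mul_ne_zero (by positivity) hm₀
  have a_ne_top : a ≠ ∞ := ENNReal.mul_ne_top (by finiteness) hm
  have inv_a : a⁻¹ = ENNReal.ofReal (2 ^ N) * (m (ball x r))⁻¹ := by
    rw [ENNReal.mul_inv (.inr hm) (.inr hm₀), ← ENNReal.inv_rpow,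
      ← ENNReal.ofReal_inv_of_pos one_half_pos, one_div, inv_inv,
      ENNReal.ofReal_rpow_of_pos two_pos]
  refine ⟨M, ?_⟩
  calc ∫⁻ y, ENNReal.ofReal |u y - M| ∂m[|ball x r]
      ≤ a⁻¹ * (ENNReal.ofReal (3 / 2 * r) * ∫⁻ y in ball x r, g y ∂m) :=
        (ENNReal.mul_le_iff_le_inv a_ne_zero a_ne_top).1 hM
    _ = ENNReal.ofReal (3 / 2 * 2 ^ N * r) * ∫⁻ y, g y ∂m[|ball x r] := by
        rw [inv_a, ProbabilityTheory.cond, lintegral_smul_measure, smul_eq_mul,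
          show (3 / 2 * 2 ^ N * r : ℝ) = 2 ^ N * (3 / 2 * r) by ring,
          ENNReal.ofReal_mul (p := 2 ^ N) (by positivity)]
        ring

end Poincare

theorem isOpenPosMeasure_of_measure_ball_pos {X : Type*} [PseudoMetricSpace X] [MeasurableSpace X]
    {m : Measure X} (h : ∀ x : X, ∀ ε > 0, 0 < m (ball x ε)) : m.IsOpenPosMeasure where
  open_pos U hU := by
    rintro ⟨x, hx⟩
    obtain ⟨ε, hε, ball_subset⟩ := Metric.isOpen_iff.1 hU x hx
    exact ((h x ε hε).trans_le (measure_mono ball_subset)).ne'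

theorem renyi_sdc_strong_local_poincare_general
    {X : Type*} [MetricSpace X] [CompleteSpace X] [MeasurableSpace X] [BorelSpace X]
    (m : Measure X) (hgeo : IsGeodesicSpace X) (hsupp : ∀ x : X, ∀ ε > 0, 0 < m (ball x ε))
    [IsLocallyFiniteMeasure m] {N : ℝ} (hN : 1 ≤ N)
    (hsdc : StronglyDisplacementConvex (renyiEntropy N m)) (u : X → ℝ) (hu : Measurable u)
    (g : X → ℝ≥0∞) (hg : IsUpperGradient u g) (x : X) (r : ℝ) (hr : 0 < r) :
    (⨍⁻ y in ball x r, ENNReal.ofReal |u y - ⨍ z in ball x r, u z ∂m| ∂m) ≤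
      ENNReal.ofReal (3 * 2 ^ N * r) * ⨍⁻ y in ball x r, g y ∂m := by
  have := isOpenPosMeasure_of_measure_ball_pos hsupp
  have := hgeo.secondCountableTopology m
  let : MeasurableSpace C(unitInterval, X) := borel _
  have : BorelSpace C(unitInterval, X) := ⟨rfl⟩
  have measure_ball_ne_zero : m (ball x r) ≠ 0 := (hsupp x r hr).ne'
  have measure_ball_ne_top := hsdc.measure_ball_ne_top hgeo hN x r
  have := cond_isProbabilityMeasure_of_finite measure_ball_ne_zero measure_ball_ne_top
  obtain ⟨M, hM⟩ := exists_lintegral_abs_sub_cond_ball_le hgeo hN hsdc hu hg hr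
    measure_ball_ne_zero measure_ball_ne_top
  have cond_eq : (m (ball x r))⁻¹ • m.restrict (ball x r) = m[|ball x r] := rfl
  simp only [laverage, average, Measure.restrict_apply_univ, cond_eq,
    ← Real.enorm_eq_ofReal_abs] at hM ⊢
  calc ∫⁻ y, ‖u y - ∫ z, u z ∂m[|ball x r]‖ₑ ∂m[|ball x r]
      ≤ 2 * ∫⁻ y, ‖u y - M‖ₑ ∂m[|ball x r] :=
        lintegral_enorm_sub_integral_le hu.aestronglyMeasurable M
    _ ≤ 2 * (ENNReal.ofReal (3 / 2 * 2 ^ N * r) * ∫⁻ y, g y ∂m[|ball x r]) := by gcongr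
    _ = ENNReal.ofReal (3 * 2 ^ N * r) * ∫⁻ y, g y ∂m[|ball x r] := by
        rw [← mul_assoc, ← ENNReal.ofReal_ofNat 2, ← ENNReal.ofReal_mul zero_le_two]
        ring_nf

/-- Remark (ii): under strong displacement convexity of `E_N` the strong local Poincaré
inequality holds with the same constant. -/
theorem renyi_sdc_strong_local_poincare
    {X : Type*} [MetricSpace X] [CompleteSpace X] [MeasurableSpace X] [BorelSpace X]
    (m : Measure X) (hgeo : IsGeodesicSpace X)
    (hsupp : ∀ x : X, ∀ ε > 0, 0 < m (Metric.ball x ε))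
    [IsLocallyFiniteMeasure m]
    {N : ℝ} (hN : 1 ≤ N) (hsdc : StronglyDisplacementConvex (renyiEntropy N m))
    (u : X → ℝ) (hu : Continuous u) (g : X → ℝ≥0∞) (hg : IsUpperGradient u g)
    (x : X) (r : ℝ) (hr : 0 < r) :
    (⨍⁻ y in Metric.ball x r,
        ENNReal.ofReal |u y - ⨍ z in Metric.ball x r, u z ∂m| ∂m)
      ≤ ENNReal.ofReal ((2:ℝ) ^ (N + 2) * r) *
          ⨍⁻ y in Metric.ball x r, g y ∂m := by
  refine (renyi_sdc_strong_local_poincare_general m hgeo hsupp hN hsdc u hu.measurable g hg x r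
    hr).trans ?_
  gcongr
  rw [Real.rpow_add two_pos, Real.rpow_two]
  linarith [Real.rpow_pos_of_pos two_pos N]
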